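/- arXiv:1207.0705 — 3 statements merged into one kernel-verified Lean document; each statement's English description precedes it below -/
import Mathlib

section
/- For every finite set Q of polynomials in ℝ[y₁,…,y_k,X,Y] there exist constants C₁ and R₀ such that for every n ≥ 1 and every real R ≥ R₀ there exists N ≤ 2^(R^(C₁·n)) such that every sequence (a₁,…,a_N) of real numbers admits an R-growing sequence b = (b₁,…,bₙ), real numbers A, B, and a transformation f ∈ {f₁, f₂} with f₁(x,X,Y) := X + Y·x and f₂(x,X,Y) := X + Y/x, such that either (f(b₁,A,B),…,f(bₙ,A,B)) or (f(bₙ,A,B),…,f(b₁,A,B)) is a subsequence of (a₁,…,a_N), and moreover b is R-well-placed with respect to q, A, B for every q ∈ Q. -/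
/-- A sequence `b` is `R`-growing if `b₁ ≥ R` and `b_{i+1} ≥ b_i ^ R`
(real exponentiation). -/
def RGrowing (R : ℝ) {n : ℕ} (b : Fin n → ℝ) : Prop :=
  (∀ h : 0 < n, R ≤ b ⟨0, h⟩) ∧
  ∀ i : ℕ, ∀ h : i + 1 < n, b ⟨i, Nat.lt_of_succ_lt h⟩ ^ R ≤ b ⟨i + 1, h⟩

/-- The two-parametric transformation `f₁(x, X, Y) = X + Y·x`. -/
noncomputable def f₁ (x X Y : ℝ) : ℝ := X + Y * x

/-- The two-parametric transformation `f₂(x, X, Y) = X + Y/x`. -/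
noncomputable def f₂ (x X Y : ℝ) : ℝ := X + Y / x

/-- A polynomial `q ∈ ℝ[y₁,…,y_k,X,Y]` is taken as a polynomial in `y₁,…,y_k` whose
coefficients `q_α` are polynomials in the two variables `X, Y`; `coeffVal q α A B` is
the value `q_α(A,B)`. -/
noncomputable def coeffVal {k : ℕ} (q : MvPolynomial (Fin k) (MvPolynomial (Fin 2) ℝ))
    (α : Fin k →₀ ℕ) (A B : ℝ) : ℝ :=
  MvPolynomial.eval ![A, B] (MvPolynomial.coeff α q)

/-- An `R`-growing sequence `b = (b₁,…,bₙ)` is `R`-well-placed w.r.t. `q, A, B` if for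
all `α, β ∈ Λ(q)`, either `R·|q_α(A,B)| ≤ b₁·|q_β(A,B)|` (the ratio is dwarfed) or
`|q_α(A,B)| ≥ bₙ^R·|q_β(A,B)|` (the ratio is gigantic). -/
def WellPlaced (R : ℝ) {n k : ℕ} (b : Fin n → ℝ)
    (q : MvPolynomial (Fin k) (MvPolynomial (Fin 2) ℝ)) (A B : ℝ) : Prop :=
  ∀ h0 : 0 < n, ∀ α ∈ q.support, ∀ β ∈ q.support,
    R * |coeffVal q α A B| ≤ b ⟨0, h0⟩ * |coeffVal q β A B| ∨
    b ⟨n - 1, Nat.sub_lt h0 Nat.one_pos⟩ ^ R * |coeffVal q β A B| ≤ |coeffVal q α A B|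

/-!
Given a long sequence, pigeonholing on values repeatedly splits off a point which is much farther
from the surviving points than these are from each other. The split-off points have distances to
a surviving point `A` that grow geometrically, so the logarithms of these distances grow
arithmetically. Repeating the construction on the logarithms gives distances of logarithms that
grow geometrically; their exponentials form an `R`-growing sequence. The terms whose distance to
`A` exceeds the reference distance `|B|` correspond to `f₁`, those closer than `|B|` to `f₂`.
Splitting off can fail only if some value is attained `n` times, and then `B = 0` works.

Well-placedness costs only a factor in the length: a ratio which is neither dwarfed nor gigantic
for a block of the growing sequence falls within the span of that block, so it can spoil only one
of several disjoint blocks, and some block is not spoiled by any of the finitely many ratios.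
-/

section Pigeonhole

variable {ι : Type*} [LinearOrder ι]

theorem exists_strictMono_forall_apply_eq {κ : Type*} [Fintype κ] [Nonempty κ] {n N : ℕ}
    (hN : Fintype.card κ * n ≤ N) (c : Fin N → κ) :
    ∃ φ : Fin n → Fin N, StrictMono φ ∧ ∃ y, ∀ j, c (φ j) = y := by
  classical
  obtain ⟨y, hy⟩ := Fintype.exists_le_card_fiber_of_mul_le_card c (hN.trans_eq (by simp))
  exact ⟨Finset.orderEmbOfCardLe _ hy, OrderEmbedding.strictMono _, y,
    fun j => (Finset.mem_filter.1 (Finset.orderEmbOfCardLe_mem _ hy j)).2⟩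

theorem exists_subset_forall_lt_or_forall_gt {S : Finset ι} {u : ι} (hu : u ∉ S) {m : ℕ}
    (hm : 2 * m ≤ S.card) :
    ∃ S' ⊆ S, m ≤ S'.card ∧ ((∀ i ∈ S', i < u) ∨ ∀ i ∈ S', u < i) := by
  have hsum := S.card_filter_add_card_filter_not (· < u)
  rcases le_or_gt m {i ∈ S | i < u}.card with h | h
  · exact ⟨_, S.filter_subset _, h, Or.inl fun i hi => (Finset.mem_filter.1 hi).2⟩
  · refine ⟨_, S.filter_subset (¬ · < u), by omega, Or.inr fun i hi => ?_⟩
    obtain ⟨hiS, hiu⟩ := Finset.mem_filter.1 hi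
    exact lt_of_le_of_ne (not_lt.1 hiu) fun h => hu (h ▸ hiS)

theorem exists_subset_mul_abs_sub_le {α : Type*} {x : α → ℝ} {S : Finset α} {c₁ c₂ : ℝ}
    (hlt : c₁ < c₂) (hx : ∀ i ∈ S, x i ∈ Set.Icc c₁ c₂) {k m : ℕ} (hm : (k + 1) * m ≤ S.card) :
    ∃ S' ⊆ S, m ≤ S'.card ∧ ∀ i ∈ S', ∀ j ∈ S', k * |x j - x i| ≤ c₂ - c₁ := by
  have hL : 0 < c₂ - c₁ := sub_pos.2 hlt
  set y : α → ℝ := fun i => k * ((x i - c₁) / (c₂ - c₁)) with hy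
  have hy_nonneg : ∀ i ∈ S, 0 ≤ y i := fun i hi =>
    mul_nonneg k.cast_nonneg (div_nonneg (sub_nonneg.2 (hx i hi).1) hL.le)
  have hy_le : ∀ i ∈ S, y i ≤ k := fun i hi =>
    mul_le_of_le_one_right k.cast_nonneg
      ((div_le_one hL).2 (sub_le_sub_right (hx i hi).2 c₁))
  obtain ⟨c, -, hc⟩ := Finset.exists_le_card_fiber_of_mul_le_card_of_maps_to
    (t := Finset.range (k + 1)) (f := fun i => ⌊y i⌋₊)
    (fun i hi => Finset.mem_range_succ_iff.2 (Nat.floor_le_of_le (hy_le i hi)))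
    ⟨0, by simp⟩ (by simpa using hm)
  refine ⟨_, S.filter_subset _, hc, fun i hi j hj => ?_⟩
  obtain ⟨hiS, hic⟩ := Finset.mem_filter.1 hi
  obtain ⟨hjS, hjc⟩ := Finset.mem_filter.1 hj
  obtain ⟨hi₁, hi₂⟩ := (Nat.floor_eq_iff (hy_nonneg i hiS)).1 hic
  obtain ⟨hj₁, hj₂⟩ := (Nat.floor_eq_iff (hy_nonneg j hjS)).1 hjc
  have hxy : (k : ℝ) * (x j - x i) = (c₂ - c₁) * (y j - y i) := by
    simp only [hy]; field_simp; ring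
  calc (k : ℝ) * |x j - x i| = (c₂ - c₁) * |y j - y i| := by
        rw [← Nat.abs_cast k, ← abs_mul, hxy, abs_mul, abs_of_pos hL]
    _ ≤ c₂ - c₁ := mul_le_of_le_one_right hL.le (abs_le.2 ⟨by linarith, by linarith⟩)

theorem exists_far_point {α : Type*} {x : α → ℝ} {S : Finset α}
    (hne : ∃ i ∈ S, ∃ j ∈ S, x i < x j) {R : ℝ} (hR : 0 < R) {k m : ℕ} (hk : 2 * R + 2 ≤ k)
    (hm : (k + 1) * m ≤ S.card) :
    ∃ u ∈ S, ∃ S' ⊆ S, m ≤ S'.card ∧ (∀ i ∈ S', x u ≠ x i) ∧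
      ∀ i ∈ S', ∀ j ∈ S', R * |x j - x i| ≤ |x u - x i| := by
  obtain ⟨i, hi, j, hj, hij⟩ := hne
  obtain ⟨p, hp, hp_min⟩ := S.exists_min_image x ⟨i, hi⟩
  obtain ⟨r, hr, hr_max⟩ := S.exists_max_image x ⟨i, hi⟩
  have hpr : x p < x r := (hp_min i hi).trans_lt (hij.trans_le (hr_max j hj))
  obtain ⟨S', hS', hcard, hdiam⟩ :=
    exists_subset_mul_abs_sub_le hpr (fun i hi => ⟨hp_min i hi, hr_max i hi⟩) hm
  rcases S'.eq_empty_or_nonempty with rfl | ⟨i₁, hi₁⟩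
  · exact ⟨p, hp, ∅, hS', hcard, by simp, by simp⟩
  obtain ⟨u, hu, hu_far⟩ : ∃ u ∈ S, x r - x p ≤ 2 * |x u - x i₁| := by
    by_contra! h
    linarith [h p hp, h r hr, neg_abs_le (x p - x i₁), le_abs_self (x r - x i₁)]
  have hfar : ∀ i ∈ S', R * (x r - x p) ≤ k * |x u - x i| := by
    intro i hi
    calc R * (x r - x p) ≤ (k / 2 - 1) * (x r - x p) :=
          mul_le_mul_of_nonneg_right (by linarith) (sub_pos.2 hpr).le
      _ = k * ((x r - x p) / 2) - (x r - x p) := by ring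
      _ ≤ k * |x u - x i₁| - k * |x i - x i₁| :=
          sub_le_sub (mul_le_mul_of_nonneg_left (by linarith) k.cast_nonneg) (hdiam i₁ hi₁ i hi)
      _ = k * (|x u - x i₁| - |x i - x i₁|) := by ring
      _ ≤ k * |x u - x i| := mul_le_mul_of_nonneg_left
          (sub_le_iff_le_add.2 (abs_sub_le _ _ _)) k.cast_nonneg
  have hk_pos : (0 : ℝ) < k := by linarith
  refine ⟨u, hu, S', hS', hcard, fun i hi heq => ?_, fun i hi j hj => ?_⟩
  · have := hfar i hi
    rw [heq, sub_self, abs_zero, mul_zero] at this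
    exact this.not_gt (mul_pos hR (sub_pos.2 hpr))
  · refine le_of_mul_le_mul_left ?_ hk_pos
    calc k * (R * |x j - x i|) = R * (k * |x j - x i|) := by ring
      _ ≤ R * (x r - x p) := mul_le_mul_of_nonneg_left (hdiam i hi j hj) hR.le
      _ ≤ k * |x u - x i| := hfar i hi

end Pigeonhole

section Expansion

variable {ι : Type*} [LinearOrder ι] {R : ℝ} {x : ι → ℝ} {i₀ : ι} {n : ℕ} {u : Fin n → ι}

/-- The points `x (u 0), x (u 1), …` move away from the centre `x i₀` geometrically with ratio
`R`, while each index `u j` lies on the same side of `i₀` as of all earlier indices. The side may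
depend on `j`. -/
structure ExpandsAround (R : ℝ) (x : ι → ℝ) (i₀ : ι) (u : Fin n → ι) : Prop where
  apply_ne : ∀ i, x (u i) ≠ x i₀
  mul_abs_le : ∀ i j, i < j → R * |x (u i) - x i₀| ≤ |x (u j) - x i₀|
  lt_of_center_lt : ∀ i j, i < j → i₀ < u j → u i < u j
  lt_of_lt_center : ∀ i j, i < j → u j < i₀ → u j < u i

namespace ExpandsAround

theorem comp_strictMono (h : ExpandsAround R x i₀ u) {m : ℕ} {φ : Fin m → Fin n}
    (hφ : StrictMono φ) : ExpandsAround R x i₀ (u ∘ φ) where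
  apply_ne i := h.apply_ne (φ i)
  mul_abs_le _ _ hij := h.mul_abs_le _ _ (hφ hij)
  lt_of_center_lt _ _ hij := h.lt_of_center_lt _ _ (hφ hij)
  lt_of_lt_center _ _ hij := h.lt_of_lt_center _ _ (hφ hij)

theorem snoc (h : ExpandsAround R x i₀ u) {v : ι} (hne : x v ≠ x i₀)
    (hmul : ∀ i, R * |x (u i) - x i₀| ≤ |x v - x i₀|)
    (hside : (i₀ < v ∧ ∀ i, u i < v) ∨ (v < i₀ ∧ ∀ i, v < u i)) :
    ExpandsAround R x i₀ (Fin.snoc (α := fun _ => ι) u v) where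
  apply_ne i := by
    cases i using Fin.lastCases with
    | last => simpa using hne
    | cast i => simpa using h.apply_ne i
  mul_abs_le i j hij := by
    cases i using Fin.lastCases with
    | last => exact absurd hij (Fin.le_last j).not_gt
    | cast i =>
      cases j using Fin.lastCases with
      | last => simpa using hmul i
      | cast j => simpa using h.mul_abs_le i j hij
  lt_of_center_lt i j hij := by
    cases i using Fin.lastCases with
    | last => exact absurd hij (Fin.le_last j).not_gt
    | cast i =>
      cases j using Fin.lastCases with
      | last =>
        simp only [Fin.snoc_last, Fin.snoc_castSucc]
        exact fun hv => hside.elim (fun hs => hs.2 i) fun hs => absurd hv hs.1.asymm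
      | cast j => simpa using h.lt_of_center_lt i j hij
  lt_of_lt_center i j hij := by
    cases i using Fin.lastCases with
    | last => exact absurd hij (Fin.le_last j).not_gt
    | cast i =>
      cases j using Fin.lastCases with
      | last =>
        simp only [Fin.snoc_last, Fin.snoc_castSucc]
        exact fun hv => hside.elim (fun hs => absurd hv hs.1.asymm) fun hs => hs.2 i
      | cast j => simpa using h.lt_of_lt_center i j hij

/-- `Real.log y` means `log |y|`, so these are the logarithms of the distances to the centre. -/
theorem log_add_log_le (h : ExpandsAround R x i₀ u) (hR : 0 < R) {i j : Fin n} (hij : i < j) :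
    Real.log R + Real.log (x (u i) - x i₀) ≤ Real.log (x (u j) - x i₀) := by
  have hpos : 0 < |x (u i) - x i₀| := abs_pos.2 (sub_ne_zero.2 (h.apply_ne i))
  rw [← Real.log_abs (x (u i) - x i₀), ← Real.log_abs (x (u j) - x i₀),
    ← Real.log_mul hR.ne' hpos.ne']
  exact Real.log_le_log (mul_pos hR hpos) (h.mul_abs_le i j hij)

theorem exists_comp_one_sided {N : ℕ} {u : Fin N → ι} (h : ExpandsAround R x i₀ u)
    (hN : 4 * n ≤ N) :
    ∃ φ : Fin n → Fin N, StrictMono φ ∧ (StrictMono (u ∘ φ) ∨ StrictAnti (u ∘ φ)) ∧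
      ((∀ j, x i₀ < x (u (φ j))) ∨ ∀ j, x (u (φ j)) < x i₀) := by
  obtain ⟨φ, hφ, ⟨s, t⟩, hst⟩ := exists_strictMono_forall_apply_eq (κ := Bool × Bool)
    (by simpa using hN) fun j => (decide (i₀ < u j), decide (x i₀ < x (u j)))
  simp only [Prod.mk.injEq] at hst
  have hexp := h.comp_strictMono hφ
  refine ⟨φ, hφ, ?_, ?_⟩
  · cases s with
    | true =>
      exact Or.inl fun i j hij => hexp.lt_of_center_lt i j hij (of_decide_eq_true (hst j).1)
    | false =>
      refine Or.inr fun i j hij => hexp.lt_of_lt_center i j hij ?_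
      exact lt_of_le_of_ne (not_lt.1 (of_decide_eq_false (hst j).1))
        fun heq => hexp.apply_ne j (congrArg x heq)
  · cases t with
    | true => exact Or.inl fun j => of_decide_eq_true (hst j).2
    | false =>
      exact Or.inr fun j =>
        lt_of_le_of_ne (not_lt.1 (of_decide_eq_false (hst j).2)) (hexp.apply_ne j)

end ExpandsAround

variable {S : Finset ι} {e k : ℕ}

theorem exists_expandsAround (hR : 0 < R) (hk : 2 * R + 2 ≤ k) (T : ℕ)
    (hfib : ∀ v, {i ∈ S | x i = v}.card < e) (hS : e * (2 * (k + 1)) ^ T ≤ S.card) :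
    ∃ i₀ ∈ S, ∃ u : Fin T → ι, (∀ i, u i ∈ S) ∧ ExpandsAround R x i₀ u := by
  have he : 0 < e := (Nat.zero_le _).trans_lt (hfib 0)
  induction T generalizing S with
  | zero =>
    obtain ⟨i₀, hi₀⟩ : S.Nonempty := Finset.card_pos.1 (he.trans_le (by simpa using hS))
    exact ⟨i₀, hi₀, Fin.elim0, by simp, by constructor <;> simp⟩
  | succ T ih =>
    have heS : e ≤ S.card := (Nat.le_mul_of_pos_right e (by positivity)).trans hS
    have hne : ∃ i ∈ S, ∃ j ∈ S, x i < x j := by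
      by_contra! h
      obtain ⟨i, hi⟩ : S.Nonempty := Finset.card_pos.1 (he.trans_le heS)
      have hfib_i := hfib (x i)
      rw [Finset.filter_true_of_mem fun j hj => (h i hi j hj).antisymm (h j hj i hi)] at hfib_i
      exact hfib_i.not_ge heS
    obtain ⟨v, hv, S₁, hS₁, hcard₁, hxv, hfar⟩ := exists_far_point hne hR hk
      (m := 2 * (e * (2 * (k + 1)) ^ T)) (hS.trans_eq' (by ring))
    have hvS₁ : v ∉ S₁ := fun hv => hxv v hv rfl
    obtain ⟨S₂, hS₂, hcard₂, hside⟩ :=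
      exists_subset_forall_lt_or_forall_gt hvS₁ hcard₁
    obtain ⟨i₀, hi₀, u, hu, hexp⟩ := ih (fun w =>
      (Finset.card_le_card (Finset.filter_subset_filter _ (hS₂.trans hS₁))).trans_lt (hfib w))
      hcard₂
    refine ⟨i₀, hS₁ (hS₂ hi₀), Fin.snoc (α := fun _ => ι) u v, fun i => ?_,
      hexp.snoc (hxv i₀ (hS₂ hi₀)) (fun i => hfar _ (hS₂ hi₀) _ (hS₂ (hu i)))
        (hside.imp (fun hs => ⟨hs _ hi₀, fun i => hs _ (hu i)⟩)
          fun hs => ⟨hs _ hi₀, fun i => hs _ (hu i)⟩)⟩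
    cases i using Fin.lastCases with
    | last => simpa using hv
    | cast i => simpa using hS₁ (hS₂ (hu i))

theorem exists_expandsAround_one_sided (hR : 0 < R) (hk : 2 * R + 2 ≤ k) (n : ℕ)
    (hfib : ∀ v, {i ∈ S | x i = v}.card < e) (hS : e * (2 * (k + 1)) ^ (4 * n) ≤ S.card) :
    ∃ i₀, ∃ u : Fin n → ι, ExpandsAround R x i₀ u ∧ (StrictMono u ∨ StrictAnti u) ∧
      ((∀ j, x i₀ < x (u j)) ∨ ∀ j, x (u j) < x i₀) := by
  obtain ⟨i₀, -, u, -, hexp⟩ := exists_expandsAround hR hk (4 * n) hfib hS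
  obtain ⟨φ, hφ, hmono, hside⟩ := hexp.exists_comp_one_sided le_rfl
  exact ⟨i₀, u ∘ φ, hexp.comp_strictMono hφ, hmono, hside⟩

end Expansion

section Growing

variable {R : ℝ} {n : ℕ}

theorem rGrowing_iff (hR : 1 ≤ R) {b : Fin n → ℝ} :
    RGrowing R b ↔ (∀ i, R ≤ b i) ∧ ∀ i j, i < j → b i ^ R ≤ b j := by
  refine ⟨fun ⟨hzero, hsucc⟩ => ?_, fun ⟨hle, hpow⟩ => ⟨fun h => hle _, fun i h =>
    hpow _ _ (Fin.mk_lt_mk.2 i.lt_succ_self)⟩⟩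
  have hle : ∀ i (h : i < n), R ≤ b ⟨i, h⟩ := by
    intro i
    induction i with
    | zero => exact hzero
    | succ i ih =>
      intro h
      have hi := ih (Nat.lt_of_succ_lt h)
      exact hi.trans ((Real.self_le_rpow_of_one_le (hR.trans hi) hR).trans (hsucc i h))
  have hpow : ∀ i j (hij : i + 1 ≤ j) (hj : j < n),
      b ⟨i, (Nat.lt_of_succ_le hij).trans hj⟩ ^ R ≤ b ⟨j, hj⟩ := by
    intro i j hij
    induction j, hij using Nat.le_induction with
    | base => exact fun hj => hsucc i hj
    | succ j _ ih =>
      intro hj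
      have hj' := Nat.lt_of_succ_lt hj
      exact (ih hj').trans
        ((Real.self_le_rpow_of_one_le (hR.trans (hle j hj')) hR).trans (hsucc j hj))
  exact ⟨fun i => hle i i.2, fun i j hij => hpow i j hij j.2⟩

theorem RGrowing.comp_strictMono {b : Fin n → ℝ} (hb : RGrowing R b) (hR : 1 ≤ R) {m : ℕ}
    {φ : Fin m → Fin n} (hφ : StrictMono φ) : RGrowing R (b ∘ φ) := by
  rw [rGrowing_iff hR] at hb ⊢
  exact ⟨fun i => hb.1 (φ i), fun i j hij => hb.2 _ _ (hφ hij)⟩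

theorem rGrowing_exp (hR : 1 ≤ R) {s : Fin n → ℝ} (hlog : ∀ i, Real.log R ≤ s i)
    (hmul : ∀ i j, i < j → R * s i ≤ s j) : RGrowing R fun i => Real.exp (s i) := by
  refine (rGrowing_iff hR).2 ⟨fun i => ?_, fun i j hij => ?_⟩
  · exact (Real.log_le_iff_le_exp (by linarith)).1 (hlog i)
  · rw [← Real.exp_mul, mul_comm]
    exact Real.exp_le_exp.2 (hmul i j hij)

theorem exists_rGrowing (hR : 1 ≤ R) (n : ℕ) : ∃ b : Fin n → ℝ, RGrowing R b := by
  refine ⟨_, rGrowing_exp hR (s := fun i => R ^ ((i : ℕ) + 1)) (fun i => ?_) fun i j hij => ?_⟩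
  · exact (Real.log_le_self (by linarith)).trans (le_self_pow₀ hR i.1.succ_ne_zero)
  · rw [← pow_succ']
    exact pow_le_pow_right₀ hR (Nat.succ_le_succ hij)

theorem exists_rGrowing_exp_abs_sub (hR : 1 < R) {k m : ℕ} (hk : 2 * R + 2 ≤ k)
    {t : Fin m → ℝ} (ht : ∀ i j, i < j → Real.log R + t i ≤ t j)
    (hm : 2 * (2 * (k + 1)) ^ (4 * n) ≤ m) :
    ∃ j₀, ∃ p : Fin n → Fin m, (StrictMono p ∨ StrictAnti p) ∧
      ((∀ j, t j₀ < t (p j)) ∨ ∀ j, t (p j) < t j₀) ∧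
      RGrowing R fun j => Real.exp |t (p j) - t j₀| := by
  have hlog : 0 < Real.log R := Real.log_pos hR
  have ht_inj : Function.Injective t :=
    StrictMono.injective fun i j hij => by linarith [ht i j hij]
  have hfib : ∀ v, {i ∈ (Finset.univ : Finset (Fin m)) | t i = v}.card < 2 := fun v =>
    Nat.lt_succ_of_le <| Finset.card_le_one.2 fun i hi j hj => ht_inj <|
      (Finset.mem_filter.1 hi).2.trans (Finset.mem_filter.1 hj).2.symm
  obtain ⟨j₀, p, hexp, hmono, hside⟩ := exists_expandsAround_one_sided
    (zero_lt_one.trans hR) hk n hfib (by simpa using hm)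
  refine ⟨j₀, p, hmono, hside, rGrowing_exp hR.le (fun i => ?_) hexp.mul_abs_le⟩
  have hne : p i ≠ j₀ := fun h => hexp.apply_ne i (congrArg t h)
  rcases hne.lt_or_gt with h | h
  · linarith [ht _ _ h, neg_abs_le (t (p i) - t j₀)]
  · linarith [ht _ _ h, le_abs_self (t (p i) - t j₀)]

end Growing

section Realization

variable {ι : Type*} [LinearOrder ι] {R : ℝ} {n : ℕ}

theorem f₁_exp_abs_log_sub_log {y z : ℝ} (hyz : 0 < y / z) (h : Real.log z ≤ Real.log y)
    (A : ℝ) : f₁ (Real.exp |Real.log y - Real.log z|) A z = A + y := by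
  obtain ⟨hy, hz⟩ := div_ne_zero_iff.1 hyz.ne'
  rw [f₁, abs_of_nonneg (sub_nonneg.2 h), ← Real.log_div hy hz, Real.exp_log hyz,
    mul_div_cancel₀ y hz]

theorem f₂_exp_abs_log_sub_log {y z : ℝ} (hyz : 0 < y / z) (h : Real.log y ≤ Real.log z)
    (A : ℝ) : f₂ (Real.exp |Real.log y - Real.log z|) A z = A + y := by
  obtain ⟨hy, hz⟩ := div_ne_zero_iff.1 hyz.ne'
  rw [f₂, abs_of_nonpos (sub_nonpos.2 h), Real.exp_neg, ← Real.log_div hy hz, Real.exp_log hyz,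
    div_inv_eq_mul, mul_div_cancel₀ y hz]

/-- The image of `b` under `f₁(·, A, B)` or under `f₂(·, A, B)` is, up to reversal, a subsequence
of `a`. Reversal is encoded by reading the subsequence at decreasing indices. -/
def Realizes (a : ι → ℝ) (b : Fin n → ℝ) (A B : ℝ) : Prop :=
  ∃ f : ℝ → ℝ → ℝ → ℝ, (f = f₁ ∨ f = f₂) ∧
    ∃ p : Fin n → ι, (StrictMono p ∨ StrictAnti p) ∧ ∀ j, a (p j) = f (b j) A B

namespace Realizes

variable {a : ι → ℝ} {b : Fin n → ℝ} {A B : ℝ}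

theorem comp_strictMono (h : Realizes a b A B) {m : ℕ} {φ : Fin m → Fin n} (hφ : StrictMono φ) :
    Realizes a (b ∘ φ) A B := by
  obtain ⟨f, hf, p, hp, hpf⟩ := h
  exact ⟨f, hf, p ∘ φ, hp.imp (·.comp hφ) (·.comp_strictMono hφ), fun j => hpf (φ j)⟩

theorem exists_strictMono (h : Realizes a b A B) :
    ∃ f : ℝ → ℝ → ℝ → ℝ, (f = f₁ ∨ f = f₂) ∧ ∃ φ : Fin n → ι, StrictMono φ ∧
      ((∀ j, a (φ j) = f (b j) A B) ∨ ∀ j, a (φ j) = f (b j.rev) A B) := by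
  obtain ⟨f, hf, p, hp | hp, hpf⟩ := h
  · exact ⟨f, hf, p, hp, Or.inl hpf⟩
  · exact ⟨f, hf, p ∘ Fin.rev, hp.comp Fin.rev_strictAnti, Or.inr fun j => hpf j.rev⟩

end Realizes

theorem exists_rGrowing_realizes_of_expandsAround (hR : 1 < R) {k m : ℕ} (hk : 2 * R + 2 ≤ k)
    {a : ι → ℝ} {i₀ : ι} {u : Fin m → ι} (hexp : ExpandsAround R a i₀ u)
    (hmono : StrictMono u ∨ StrictAnti u)
    (hside : (∀ j, a i₀ < a (u j)) ∨ ∀ j, a (u j) < a i₀)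
    (hm : 2 * (2 * (k + 1)) ^ (4 * n) ≤ m) :
    ∃ b : Fin n → ℝ, RGrowing R b ∧ ∃ A B, Realizes a b A B := by
  obtain ⟨j₀, p, hp, hlog, hgrow⟩ := exists_rGrowing_exp_abs_sub hR hk
    (fun i j hij => hexp.log_add_log_le (zero_lt_one.trans hR) hij) hm
  have hdiv : ∀ j, 0 < (a (u (p j)) - a i₀) / (a (u j₀) - a i₀) := fun j => by
    rcases hside with h | h
    · exact div_pos (sub_pos.2 (h _)) (sub_pos.2 (h _))
    · exact div_pos_of_neg_of_neg (sub_neg.2 (h _)) (sub_neg.2 (h _))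
  have hup : StrictMono (u ∘ p) ∨ StrictAnti (u ∘ p) := by
    rcases hmono with hu | hu <;> rcases hp with hp | hp
    · exact Or.inl (hu.comp hp)
    · exact Or.inr (hu.comp_strictAnti hp)
    · exact Or.inr (hu.comp_strictMono hp)
    · exact Or.inl (hu.comp hp)
  refine ⟨_, hgrow, a i₀, a (u j₀) - a i₀, ?_⟩
  rcases hlog with h | h
  · refine ⟨f₁, Or.inl rfl, u ∘ p, hup, fun j => ?_⟩
    rw [f₁_exp_abs_log_sub_log (hdiv j) (h j).le, add_sub_cancel, Function.comp_apply]
  · refine ⟨f₂, Or.inr rfl, u ∘ p, hup, fun j => ?_⟩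
    rw [f₂_exp_abs_log_sub_log (hdiv j) (h j).le, add_sub_cancel, Function.comp_apply]

theorem exists_rGrowing_realizes_of_le_card_fiber (hR : 1 ≤ R) {a : ι → ℝ} {S : Finset ι} {v : ℝ}
    (hv : n ≤ {i ∈ S | a i = v}.card) :
    ∃ b : Fin n → ℝ, RGrowing R b ∧ ∃ A B, Realizes a b A B := by
  obtain ⟨b, hb⟩ := exists_rGrowing hR n
  refine ⟨b, hb, v, 0, f₁, Or.inl rfl, Finset.orderEmbOfCardLe _ hv,
    Or.inl (OrderEmbedding.strictMono _), fun j => ?_⟩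
  rw [(Finset.mem_filter.1 (Finset.orderEmbOfCardLe_mem _ hv j)).2, f₁, zero_mul, add_zero]

theorem exists_rGrowing_realizes (hR : 1 < R) {k : ℕ} (hk : 2 * R + 2 ≤ k) (n : ℕ) (a : ι → ℝ)
    (S : Finset ι)
    (hS : n * (2 * (k + 1)) ^ (4 * (2 * (2 * (k + 1)) ^ (4 * n))) ≤ S.card) :
    ∃ b : Fin n → ℝ, RGrowing R b ∧ ∃ A B, Realizes a b A B := by
  by_cases hfib : ∀ v, {i ∈ S | a i = v}.card < n
  · obtain ⟨i₀, u, hexp, hmono, hside⟩ :=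
      exists_expandsAround_one_sided (zero_lt_one.trans hR) hk _ hfib hS
    exact exists_rGrowing_realizes_of_expandsAround hR hk hexp hmono hside le_rfl
  · push Not at hfib
    obtain ⟨v, hv⟩ := hfib
    exact exists_rGrowing_realizes_of_le_card_fiber hR.le hv

end Realization

section WellPlaced

variable {R : ℝ} {n : ℕ}

/-- The ratio `u / v` of two nonnegative reals is dwarfed or gigantic with respect to the growing
sequence `b`. The inequalities are cross-multiplied, as in `WellPlaced`, to allow `v = 0`. -/
def WellPlacedRatio (R : ℝ) (b : Fin n → ℝ) (u v : ℝ) : Prop :=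
  ∀ h0 : 0 < n, R * u ≤ b ⟨0, h0⟩ * v ∨ b ⟨n - 1, Nat.sub_lt h0 Nat.one_pos⟩ ^ R * v ≤ u

theorem RGrowing.mul_le_or_rpow_mul_le {b : Fin n → ℝ} (hb : RGrowing R b) (hR : 2 ≤ R)
    {i j l : Fin n} (hij : i < j) (hjl : j < l) {u v : ℝ} (hv : 0 ≤ v) :
    R * u ≤ b l * v ∨ b i ^ R * v ≤ u := by
  obtain ⟨hle, hpow⟩ := (rGrowing_iff (one_le_two.trans hR)).1 hb
  refine or_iff_not_imp_right.2 fun hu => ?_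
  have hRb : R * b j ≤ b j ^ R := calc
    R * b j ≤ b j * b j := mul_le_mul_of_nonneg_right (hle j) (by linarith [hle j])
    _ = b j ^ (2 : ℝ) := by rw [Real.rpow_two, sq]
    _ ≤ b j ^ R := Real.rpow_le_rpow_of_exponent_le (by linarith [hle j]) hR
  calc R * u ≤ R * (b j * v) := mul_le_mul_of_nonneg_left
        ((not_le.1 hu).le.trans (mul_le_mul_of_nonneg_right (hpow i j hij) hv)) (by linarith)
    _ = R * b j * v := by ring
    _ ≤ b l * v := mul_le_mul_of_nonneg_right (hRb.trans (hpow j l hjl)) hv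

theorem RGrowing.wellPlacedRatio_or_wellPlacedRatio {N : ℕ} {b : Fin N → ℝ} (hb : RGrowing R b)
    (hR : 2 ≤ R) {φ ψ : Fin n → Fin N} {j : Fin N} (hφ : ∀ i, φ i < j) (hψ : ∀ i, j < ψ i)
    {u v : ℝ} (hv : 0 ≤ v) :
    WellPlacedRatio R (b ∘ φ) u v ∨ WellPlacedRatio R (b ∘ ψ) u v := by
  rcases n.eq_zero_or_pos with rfl | hn
  · exact Or.inl fun h0 => absurd h0 (lt_irrefl 0)
  · rcases hb.mul_le_or_rpow_mul_le hR (hφ ⟨n - 1, Nat.sub_lt hn Nat.one_pos⟩) (hψ ⟨0, hn⟩) hv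
      with h | h
    · exact Or.inr fun _ => Or.inl h
    · exact Or.inl fun _ => Or.inr h

theorem finProdFinEquiv_lt_of_fst_lt {m : ℕ} {k l : Fin m} (hkl : k < l) (i j : Fin n) :
    finProdFinEquiv (k, i) < finProdFinEquiv (l, j) := by
  rw [Fin.lt_def, finProdFinEquiv_apply_val, finProdFinEquiv_apply_val]
  calc (i : ℕ) + n * k < n + n * k := Nat.add_lt_add_right i.2 _
    _ = n * (k + 1) := by ring
    _ ≤ n * l := Nat.mul_le_mul_left n hkl
    _ ≤ j + n * l := Nat.le_add_left _ _

theorem finProdFinEquiv_strictMono_right {m : ℕ} (k : Fin m) :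
    StrictMono fun i : Fin n => finProdFinEquiv (k, i) := fun i j hij => by
  rw [Fin.lt_def, finProdFinEquiv_apply_val, finProdFinEquiv_apply_val]
  exact Nat.add_lt_add_right hij _

/-- Blocks have length `n + 1`, the extra last term separating consecutive blocks. -/
theorem RGrowing.exists_wellPlacedRatio {κ : Type*} [Fintype κ]
    {b : Fin ((Fintype.card κ + 1) * (n + 1)) → ℝ} (hb : RGrowing R b) (hR : 2 ≤ R)
    (u v : κ → ℝ) (hv : ∀ c, 0 ≤ v c) :
    ∃ ψ : Fin n → Fin ((Fintype.card κ + 1) * (n + 1)), StrictMono ψ ∧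
      ∀ c, WellPlacedRatio R (b ∘ ψ) (u c) (v c) := by
  set block : Fin (Fintype.card κ + 1) → Fin n → Fin ((Fintype.card κ + 1) * (n + 1)) :=
    fun k i => finProdFinEquiv (k, i.castSucc)
  have hmono : ∀ k, StrictMono (block k) := fun k =>
    (finProdFinEquiv_strictMono_right k).comp Fin.strictMono_castSucc
  by_contra! hbad
  choose c hc using fun k => hbad (block k) (hmono k)
  obtain ⟨k, l, hkl, hckl⟩ := Fintype.exists_ne_map_eq_of_card_lt c (by simp)
  wlog hlt : k < l generalizing k l
  · exact this l k hkl.symm hckl.symm (hkl.lt_or_gt.resolve_left hlt)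
  rcases hb.wellPlacedRatio_or_wellPlacedRatio hR (φ := block k) (ψ := block l)
    (j := finProdFinEquiv (k, Fin.last n)) (u := u (c k))
    (fun i => finProdFinEquiv_strictMono_right k (Fin.castSucc_lt_last i))
    (fun i => finProdFinEquiv_lt_of_fst_lt hlt _ _) (hv (c k)) with h | h
  · exact hc k h
  · exact hc l (hckl ▸ h)

end WellPlaced

section Bound

theorem mul_pow_le_two_pow {M n : ℕ} (hM : 9 ≤ M) :
    n * M ^ (4 * (2 * M ^ (4 * n))) ≤ 2 ^ M ^ (6 * n) := by
  rcases n.eq_zero_or_pos with rfl | hn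
  · simp
  have hn_le : n ≤ 2 ^ M ^ (4 * n) := calc
    n ≤ M ^ n := (Nat.lt_pow_self (by omega)).le
    _ ≤ M ^ (4 * n) := Nat.pow_le_pow_right (by omega) (by omega)
    _ ≤ 2 ^ M ^ (4 * n) := Nat.lt_two_pow_self.le
  have hM_le : M ≤ 2 ^ M := Nat.lt_two_pow_self.le
  calc n * M ^ (4 * (2 * M ^ (4 * n)))
      ≤ 2 ^ M ^ (4 * n) * (2 ^ M) ^ (4 * (2 * M ^ (4 * n))) := by gcongr
    _ = 2 ^ (M ^ (4 * n) * (1 + 8 * M)) := by rw [← pow_mul, ← pow_add]; ring_nf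
    _ ≤ 2 ^ (M ^ (4 * n) * M ^ 2) := by gcongr <;> nlinarith
    _ = 2 ^ M ^ (4 * n + 2) := by rw [← pow_add]
    _ ≤ 2 ^ M ^ (6 * n) :=
      Nat.pow_le_pow_right two_pos (Nat.pow_le_pow_right (by omega) (by omega))

theorem natCast_mul_pow_le_two_rpow {R : ℝ} (hR : 1 ≤ R) {M n : ℕ} (hM : 9 ≤ M)
    (hMR : (M : ℝ) ≤ R ^ 2) {x : ℝ} (hx : 12 * n ≤ x) :
    ((n * M ^ (4 * (2 * M ^ (4 * n))) : ℕ) : ℝ) ≤ 2 ^ R ^ x := by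
  have hexp : (M : ℝ) ^ (6 * n) ≤ R ^ x := calc
    (M : ℝ) ^ (6 * n) ≤ (R ^ 2) ^ (6 * n) := by gcongr
    _ = R ^ ((12 * n : ℕ) : ℝ) := by rw [Real.rpow_natCast, ← pow_mul]; ring_nf
    _ ≤ R ^ x := Real.rpow_le_rpow_of_exponent_le hR (by exact_mod_cast hx)
  calc ((n * M ^ (4 * (2 * M ^ (4 * n))) : ℕ) : ℝ) ≤ ((2 ^ M ^ (6 * n) : ℕ) : ℝ) :=
        Nat.cast_le.2 (mul_pow_le_two_pow hM)
    _ = (2 : ℝ) ^ ((M : ℝ) ^ (6 * n)) := by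
        rw [← Nat.cast_pow, Real.rpow_natCast, Nat.cast_pow, Nat.cast_ofNat]
    _ ≤ 2 ^ R ^ x := Real.rpow_le_rpow_of_exponent_le one_le_two hexp

end Bound

theorem stmt8_general {ι : Type*} [Finite ι] (g : ι → ℝ → ℝ → ℝ) :
    ∃ C₁ R₀ : ℝ, ∀ n : ℕ, 1 ≤ n → ∀ R : ℝ, R₀ ≤ R →
      ∃ N : ℕ, (N : ℝ) ≤ (2 : ℝ) ^ (R ^ (C₁ * (n : ℝ))) ∧
      ∀ a : Fin N → ℝ, ∃ b : Fin n → ℝ, RGrowing R b ∧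
        ∃ A B : ℝ, ∃ f : ℝ → ℝ → ℝ → ℝ, (f = f₁ ∨ f = f₂) ∧
          (∃ φ : Fin n → Fin N, StrictMono φ ∧
            ((∀ j : Fin n, a (φ j) = f (b j) A B) ∨
             (∀ j : Fin n, a (φ j) = f (b j.rev) A B))) ∧
          ∀ c d, WellPlacedRatio R b |g c A B| |g d A B| := by
  cases nonempty_fintype ι
  refine ⟨24 * (Fintype.card (ι × ι) + 1), 8, fun n hn R hR => ?_⟩
  set m := (Fintype.card (ι × ι) + 1) * (n + 1) with hm
  set k := 2 * ⌈R⌉₊ + 2 with hk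
  have hkR : 2 * R + 2 ≤ k := by push_cast [hk]; linarith [Nat.le_ceil R]
  refine ⟨m * (2 * (k + 1)) ^ (4 * (2 * (2 * (k + 1)) ^ (4 * m))),
    natCast_mul_pow_le_two_rpow (by linarith) ?_ ?_ ?_, fun a => ?_⟩
  · have : 8 ≤ ⌈R⌉₊ := by exact_mod_cast hR.trans (Nat.le_ceil R)
    omega
  · have := Nat.ceil_lt_add_one (show 0 ≤ R by linarith)
    push_cast [hk]; nlinarith
  · have : (1 : ℝ) ≤ n := by exact_mod_cast hn
    push_cast [hm]; nlinarith [(Fintype.card (ι × ι)).cast_nonneg (α := ℝ)]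
  · obtain ⟨b, hb, A, B, hreal⟩ :=
      exists_rGrowing_realizes (by linarith) hkR m a Finset.univ (by simp)
    obtain ⟨ψ, hψ, hwell⟩ := hb.exists_wellPlacedRatio (by linarith)
      (fun c : ι × ι => |g c.1 A B|) (fun c => |g c.2 A B|) fun c => abs_nonneg _
    obtain ⟨f, hf, hφ⟩ := (hreal.comp_strictMono hψ).exists_strictMono
    exact ⟨b ∘ ψ, hb.comp_strictMono (by linarith) hψ, A, B, f, hf, hφ, fun c d => hwell (c, d)⟩

/-- for every finite set `Q` of polynomials in `ℝ[y₁,…,y_k,X,Y]` there are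
`C₁` and `R₀` such that for every `n ≥ 1` and `R ≥ R₀` there is `N ≤ 2^(R^(C₁·n))` such
that every `N`-term sequence admits an `R`-growing sequence `b`, parameters `A, B`, and
`f ∈ {f₁, f₂}` with the image of `b` or of its reversal under `f(·,A,B)` a subsequence,
and with `b` `R`-well-placed w.r.t. every `q ∈ Q`, `A`, `B`. -/
theorem stmt8 (k : ℕ) (Q : Finset (MvPolynomial (Fin k) (MvPolynomial (Fin 2) ℝ))) :
    ∃ C₁ R₀ : ℝ, ∀ n : ℕ, 1 ≤ n → ∀ R : ℝ, R₀ ≤ R →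
      ∃ N : ℕ, (N : ℝ) ≤ (2 : ℝ) ^ (R ^ (C₁ * (n : ℝ))) ∧
      ∀ a : Fin N → ℝ, ∃ b : Fin n → ℝ, RGrowing R b ∧
        ∃ A B : ℝ, ∃ f : ℝ → ℝ → ℝ → ℝ, (f = f₁ ∨ f = f₂) ∧
          (∃ φ : Fin n → Fin N, StrictMono φ ∧
            ((∀ j : Fin n, a (φ j) = f (b j) A B) ∨
             (∀ j : Fin n, a (φ j) = f (b j.rev) A B))) ∧
          ∀ q ∈ Q, WellPlaced R b q A B := by
  obtain ⟨C₁, R₀, h⟩ := stmt8_general fun c : Σ q : Q, q.1.support => coeffVal c.1.1 c.2.1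
  refine ⟨C₁, R₀, fun n hn R hR => (h n hn R hR).imp fun N hN => ⟨hN.1, fun a => ?_⟩⟩
  obtain ⟨b, hb, A, B, f, hf, hφ, hwell⟩ := hN.2 a
  exact ⟨b, hb, A, B, f, hf, hφ, fun q hq h0 α hα β hβ =>
    hwell ⟨⟨q, hq⟩, α, hα⟩ ⟨⟨q, hq⟩, β, hβ⟩ h0⟩
end

section
/- Let Q be a finite set of polynomials in ℝ[X,Y], let σ : Q → {−1,0,1}, and let D and G be finite sets of pairs (p, p′) of polynomials with p, p′ ∈ Q and σ(p′) ≠ 0 for every denominator p′ occurring in D ∪ G. Define, for reals L and H, Ξ(L,H) := ∃ X, Y ∈ ℝ such that sgn q(X,Y) = σ(q) for all q ∈ Q, p(X,Y)/p′(X,Y) ≤ L for all (p,p′) ∈ D, and p(X,Y)/p′(X,Y) ≥ H for all (p,p′) ∈ G. Then the following two statements are equivalent: Ψ: for every n ∈ ℕ and every real R ≥ 2 there exist reals L and H with L ≥ R, H ≥ L^(R^(n+2)), and Ξ(L,H); and Ψ*: for every real R ≥ 2 there exists a real L ≥ R such that Ξ(L,H) holds for every real H. -/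
/-- The formula `Ξ(L,H)`: there exist reals `X, Y` realizing the prescribed signs `σ`
on `Q`, making all ratios from `D` at most `L`, and all ratios from `G` at least `H`. -/
def Xi (Q : Finset (MvPolynomial (Fin 2) ℝ)) (σ : MvPolynomial (Fin 2) ℝ → ℝ)
    (D G : Finset (MvPolynomial (Fin 2) ℝ × MvPolynomial (Fin 2) ℝ)) (L H : ℝ) : Prop :=
  ∃ X Y : ℝ,
    (∀ q ∈ Q, Real.sign (MvPolynomial.eval ![X, Y] q) = σ q) ∧
    (∀ pp ∈ D,
      MvPolynomial.eval ![X, Y] pp.1 / MvPolynomial.eval ![X, Y] pp.2 ≤ L) ∧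
    (∀ pp ∈ G,
      H ≤ MvPolynomial.eval ![X, Y] pp.1 / MvPolynomial.eval ![X, Y] pp.2)

/-!
Comparing sign diagrams of real polynomials through increasing bijections of the line, the
Cohen–Hörmander method of quantifier elimination applies: derivatives and pseudo-remainders reduce
the sign diagram of a polynomial to those of polynomials of smaller degree. Eliminating `Y` and then
`X`, the truth of `Ξ(L,H)` depends only on the signs of finitely many polynomials in `L` and `H`.
As the roots in `H` of such a polynomial are bounded by a power of `L`, for some `k` and all large
`L` these signs are constant on `H ≥ L ^ k`. So one witness `H ≥ L ^ k` yields all larger `H`, and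
the smaller ones come for free since `Ξ(L,H)` gets weaker as `H` decreases.
-/

open Filter Set Polynomial
open SignType (sign)

theorem sign_eq_of_isPreconnected {α β : Type*} [TopologicalSpace α] [Zero β] [LinearOrder β]
    [TopologicalSpace β] [OrderTopology β] {s : Set α} (hs : IsPreconnected s) {f : α → β}
    (hf : ContinuousOn f s) (hne : ∀ x ∈ s, f x ≠ 0) {x y : α} (hx : x ∈ s) (hy : y ∈ s) :
    sign (f x) = sign (f y) :=
  hs.constant (f := fun z => sign (f z))
    (fun z hz => (continuousAt_sign_of_ne_zero (hne z hz)).comp_continuousWithinAt (hf z hz)) hx hy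

theorem eventually_sign_eq_of_isEquivalent {α : Type*} {l : Filter α} {u v : α → ℝ}
    (h : Asymptotics.IsEquivalent l u v) : ∀ᶠ x in l, sign (u x) = sign (v x) := by
  obtain ⟨φ, hφ, huv⟩ := h.exists_pos_eq_mul
  filter_upwards [hφ, huv] with x hx hux
  rw [hux, Pi.mul_apply, sign_mul, sign_pos hx, one_mul]

theorem sign_div_sub {K : Type*} [Field K] [LinearOrder K] [IsStrictOrderedRing K] {a b : K}
    (c : K) (hb : b ≠ 0) : sign (a / b - c) = sign ((a - c * b) * b) := by
  have h : (a - c * b) * b = (a / b - c) * b ^ 2 := by field_simp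
  rw [h, sign_mul, sign_pos (by positivity : 0 < b ^ 2), mul_one]

theorem coe_sign_eq_real_sign (x : ℝ) : (sign x : ℝ) = Real.sign x := by
  rcases lt_trichotomy x 0 with h | rfl | h
  · simp [sign_neg h, Real.sign_of_neg h]
  · simp
  · simp [sign_pos h, Real.sign_of_pos h]

theorem exists_orderIso_apply_eq_of_lt {a b r s : ℝ} (har : a < r) (hrs : r < s) (hsb : s < b) :
    ∃ u : ℝ ≃o ℝ, u r = s ∧ ∀ x ∉ Ioo a b, u x = x := by
  -- The piecewise linear function through `(a, a)`, `(r, s)` and `(b, b)` is concave on `[a, b]`.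
  let c := (s - a) / (r - a)
  let d := (b - s) / (b - r)
  have hc : 1 < c := (one_lt_div (by linarith)).2 (by linarith)
  have hd : 0 < d := div_pos (by linarith) (by linarith)
  have hd' : d < 1 := (div_lt_one (by linarith)).2 (by linarith)
  let v : ℝ → ℝ := fun x => max x (min (a + c * (x - a)) (b - d * (b - x)))
  have v_strictMono : StrictMono v := fun x y hxy =>
    max_lt_max hxy (min_lt_min (by nlinarith) (by nlinarith))
  have v_eq : ∀ x ∉ Ioo a b, v x = x := fun x hx => max_eq_left <| by
    rcases le_or_gt x a with hxa | hax
    · exact (min_le_left _ _).trans (by nlinarith)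
    · have hbx : b ≤ x := not_lt.1 fun hxb => hx ⟨hax, hxb⟩
      exact (min_le_right _ _).trans (by nlinarith)
  have v_surjective : Function.Surjective v := by
    have hv : Continuous v := by fun_prop
    refine hv.surjective (tendsto_atTop_mono (fun x => le_max_left _ _) tendsto_id) ?_
    refine tendsto_id.congr' ?_
    filter_upwards [eventually_le_atBot a] with x hx
    exact (v_eq x fun h => h.1.not_ge hx).symm
  refine ⟨v_strictMono.orderIsoOfSurjective v v_surjective, ?_, v_eq⟩
  change max r (min (a + c * (r - a)) (b - d * (b - r))) = s
  rw [div_mul_cancel₀ _ (by linarith), div_mul_cancel₀ _ (by linarith)]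
  simp [hrs.le]

theorem exists_orderIso_apply_eq {a b r s : ℝ} (hr : r ∈ Ioo a b) (hs : s ∈ Ioo a b) :
    ∃ u : ℝ ≃o ℝ, u r = s ∧ ∀ x ∉ Ioo a b, u x = x := by
  rcases lt_trichotomy r s with hrs | rfl | hsr
  · exact exists_orderIso_apply_eq_of_lt hr.1 hrs hs.2
  · exact ⟨OrderIso.refl ℝ, rfl, fun _ _ => rfl⟩
  · obtain ⟨u, hus, hu⟩ := exists_orderIso_apply_eq_of_lt hs.1 hsr hr.2
    exact ⟨u.symm, u.symm_apply_eq.2 hus.symm, fun x hx => u.symm_apply_eq.2 (hu x hx).symm⟩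

theorem exists_mem_Ioo_forall_notMem_Ioo {α : Type*} [LinearOrder α] (Z : Finset α) {l m x : α}
    (hl : l ∈ Z) (hm : m ∈ Z) (hx : x ∈ Ioo l m) (hxZ : x ∉ Z) :
    ∃ a ∈ Z, ∃ b ∈ Z, x ∈ Ioo a b ∧ Ioo a b ⊆ Ioo l m ∧ ∀ z ∈ Z, z ∉ Ioo a b := by
  obtain ⟨a, ha, ha_max⟩ := (Z.filter (· < x)).exists_max_image id ⟨l, by simp [hl, hx.1]⟩
  obtain ⟨b, hb, hb_min⟩ := (Z.filter (x < ·)).exists_min_image id ⟨m, by simp [hm, hx.2]⟩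
  rw [Finset.mem_filter] at ha hb
  refine ⟨a, ha.1, b, hb.1, ⟨ha.2, hb.2⟩,
    Ioo_subset_Ioo (ha_max l (by simp [hl, hx.1])) (hb_min m (by simp [hm, hx.2])),
    fun z hz hzab => ?_⟩
  rcases lt_trichotomy z x with hzx | rfl | hxz
  · exact hzab.1.not_ge (ha_max z (Finset.mem_filter.2 ⟨hz, hzx⟩))
  · exact hxZ hz
  · exact hzab.2.not_ge (hb_min z (Finset.mem_filter.2 ⟨hz, hxz⟩))

/-- The functions `p` and `q` are strictly monotone on `s`, in the same direction. -/
def StrictComonotoneOn (p q : ℝ → ℝ) (s : Set ℝ) : Prop :=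
  (StrictMonoOn p s ∧ StrictMonoOn q s) ∨ (StrictAntiOn p s ∧ StrictAntiOn q s)

section StrictComonotoneOn

variable {p q : ℝ → ℝ} {a b x : ℝ}

theorem exists_eq_zero_of_strictMonoOn (hp : StrictMonoOn p (Icc a b))
    (hq : ContinuousOn q (Icc a b)) (ha : sign (p a) = sign (q a)) (hb : sign (p b) = sign (q b))
    (hx : x ∈ Ioo a b) (hx0 : p x = 0) : ∃ y ∈ Ioo a b, q y = 0 := by
  have hab : a ≤ b := (hx.1.trans hx.2).le
  have hpa : p a < 0 := hx0 ▸ hp (left_mem_Icc.2 hab) (Ioo_subset_Icc_self hx) hx.1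
  have hpb : 0 < p b := hx0 ▸ hp (Ioo_subset_Icc_self hx) (right_mem_Icc.2 hab) hx.2
  rw [sign_neg hpa, eq_comm, sign_eq_neg_one_iff] at ha
  rw [sign_pos hpb, eq_comm, sign_eq_one_iff] at hb
  exact intermediate_value_Ioo hab hq ⟨ha, hb⟩

theorem sign_eq_of_strictMonoOn (hp : StrictMonoOn p (Icc a b)) (hq : StrictMonoOn q (Icc a b))
    (hp_cont : ContinuousOn p (Icc a b)) (ha : sign (p a) = sign (q a))
    (hb : sign (p b) = sign (q b)) (hne : ∀ y ∈ Ioo a b, p y ≠ 0) (hx : x ∈ Ioo a b) :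
    sign (p x) = sign (q x) := by
  have hab : a ≤ b := (hx.1.trans hx.2).le
  have hax := hq (left_mem_Icc.2 hab) (Ioo_subset_Icc_self hx) hx.1
  have hxb := hq (Ioo_subset_Icc_self hx) (right_mem_Icc.2 hab) hx.2
  rcases lt_or_ge (p a) 0 with hpa | hpa
  · have hpb : p b ≤ 0 := not_lt.1 fun hpb =>
      let ⟨y, hy, hy0⟩ := intermediate_value_Ioo hab hp_cont ⟨hpa, hpb⟩
      hne y hy hy0
    have hqb : q b ≤ 0 := by rwa [← sign_nonpos_iff, ← hb, sign_nonpos_iff]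
    have hpx := hp (Ioo_subset_Icc_self hx) (right_mem_Icc.2 hab) hx.2
    rw [sign_neg (hpx.trans_le hpb), sign_neg (hxb.trans_le hqb)]
  · have hqa : 0 ≤ q a := by rwa [← sign_nonneg_iff, ← ha, sign_nonneg_iff]
    have hpx := hp (left_mem_Icc.2 hab) (Ioo_subset_Icc_self hx) hx.1
    rw [sign_pos (hpa.trans_lt hpx), sign_pos (hqa.trans_lt hax)]

namespace StrictComonotoneOn

theorem exists_eq_zero (h : StrictComonotoneOn p q (Icc a b)) (hq : ContinuousOn q (Icc a b))
    (ha : sign (p a) = sign (q a)) (hb : sign (p b) = sign (q b)) (hx : x ∈ Ioo a b)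
    (hx0 : p x = 0) : ∃ y ∈ Ioo a b, q y = 0 := by
  rcases h with ⟨hp, -⟩ | ⟨hp, -⟩
  · exact exists_eq_zero_of_strictMonoOn hp hq ha hb hx hx0
  · simpa using exists_eq_zero_of_strictMonoOn hp.neg hq.neg
      (by simpa [Left.sign_neg] using ha) (by simpa [Left.sign_neg] using hb) hx
      (by simpa using hx0)

theorem sign_eq (h : StrictComonotoneOn p q (Icc a b)) (hp : ContinuousOn p (Icc a b))
    (ha : sign (p a) = sign (q a)) (hb : sign (p b) = sign (q b))
    (hne : ∀ y ∈ Ioo a b, p y ≠ 0) (hx : x ∈ Ioo a b) : sign (p x) = sign (q x) := by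
  rcases h with ⟨hpm, hqm⟩ | ⟨hpm, hqm⟩
  · exact sign_eq_of_strictMonoOn hpm hqm hp ha hb hne hx
  · simpa [Left.sign_neg] using sign_eq_of_strictMonoOn hpm.neg hqm.neg hp.neg
      (by simpa [Left.sign_neg] using ha) (by simpa [Left.sign_neg] using hb)
      (by simpa using hne) hx

theorem comp_right {s t : Set ℝ} (h : StrictComonotoneOn p q t) (hst : s ⊆ t) (u : ℝ ≃o ℝ)
    (hu : MapsTo u s t) : StrictComonotoneOn p (q ∘ u) s :=
  h.imp (fun h => ⟨h.1.mono hst, h.2.comp (u.strictMono.strictMonoOn s) hu⟩)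
    fun h => ⟨h.1.mono hst, h.2.comp_strictMonoOn (u.strictMono.strictMonoOn s) hu⟩

theorem comp_orderIso {Z : Set ℝ} (h : ∀ a b, (∀ z ∈ Z, z ∉ Ioo a b) →
      StrictComonotoneOn p q (Icc a b)) {u : ℝ ≃o ℝ} (hu : ∀ z ∈ Z, u z = z)
    (a b : ℝ) (hZ : ∀ z ∈ Z, z ∉ Ioo a b) : StrictComonotoneOn p (q ∘ u) (Icc a b) := by
  refine (h (min a (u a)) (max b (u b)) fun z hz hzab => hZ z hz ?_).comp_right
    (Icc_subset_Icc (min_le_left _ _) (le_max_left _ _)) u fun x hx =>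
      ⟨(min_le_right _ _).trans (u.monotone hx.1), (u.monotone hx.2).trans (le_max_right _ _)⟩
  have hua : u a < z ↔ a < z := by rw [← hu z hz, u.lt_iff_lt, hu z hz]
  have hub : z < u b ↔ z < b := by rw [← hu z hz, u.lt_iff_lt, hu z hz]
  simpa [mem_Ioo, min_lt_iff, lt_max_iff, hua, hub] using hzab

end StrictComonotoneOn

theorem sign_eq_of_strictComonotoneOn (hp : Continuous p) {Z : Finset ℝ} {l m : ℝ}
    (hl : l ∈ Z) (hm : m ∈ Z) (hlm : ∀ z ∉ Ioo l m, sign (p z) = sign (q z))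
    (hZ : ∀ z ∈ Z, sign (p z) = sign (q z))
    (hpq : ∀ a b, (∀ z ∈ Z, z ∉ Ioo a b) → StrictComonotoneOn p q (Icc a b))
    (hroot : ∀ z ∈ Ioo l m, p z = 0 → z ∈ Z) (x : ℝ) : sign (p x) = sign (q x) := by
  by_cases hxZ : x ∈ Z
  · exact hZ x hxZ
  by_cases hxlm : x ∈ Ioo l m
  · obtain ⟨a, ha, b, hb, hxab, hlm', hab⟩ := exists_mem_Ioo_forall_notMem_Ioo Z hl hm hxlm hxZ
    exact (hpq a b hab).sign_eq hp.continuousOn (hZ a ha) (hZ b hb)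
      (fun y hy hy0 => hab y (hroot y (hlm' hy) hy0) hy) hxab
  · exact hlm x hxlm

theorem exists_orderIso_apply_eq_zero (hq : Continuous q) {Z : Finset ℝ} {l m : ℝ} (hl : l ∈ Z)
    (hm : m ∈ Z) (hZ : ∀ z ∈ Z, sign (p z) = sign (q z))
    (hpq : ∀ a b, (∀ z ∈ Z, z ∉ Ioo a b) → StrictComonotoneOn p q (Icc a b))
    (hx : x ∈ Ioo l m) (hxZ : x ∉ Z) (hx0 : p x = 0) :
    ∃ v : ℝ ≃o ℝ, q (v x) = 0 ∧ (∀ z ∈ Z, v z = z) ∧ ∀ z ∉ Ioo l m, v z = z := by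
  obtain ⟨a, ha, b, hb, hxab, hlm, hab⟩ := exists_mem_Ioo_forall_notMem_Ioo Z hl hm hx hxZ
  obtain ⟨y, hy, hy0⟩ := (hpq a b hab).exists_eq_zero hq.continuousOn (hZ a ha) (hZ b hb) hxab hx0
  obtain ⟨v, hvx, hv⟩ := exists_orderIso_apply_eq hxab hy
  exact ⟨v, hvx ▸ hy0, fun z hz => hv z (hab z hz), fun z hz => hv z fun h => hz (hlm h)⟩

-- The roots of `p` in `R` are moved onto roots of `q` one at a time and then added to `Z`.
theorem exists_orderIso_forall_sign_eq (hp : Continuous p) (hq : Continuous q) {Z : Finset ℝ}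
    {l m : ℝ} (hl : l ∈ Z) (hm : m ∈ Z) (hlm : ∀ z ∉ Ioo l m, sign (p z) = sign (q z))
    (hZ : ∀ z ∈ Z, sign (p z) = sign (q z))
    (hpq : ∀ a b, (∀ z ∈ Z, z ∉ Ioo a b) → StrictComonotoneOn p q (Icc a b))
    (R : Finset ℝ) (hroot : ∀ z ∈ Ioo l m, p z = 0 → z ∈ Z ∨ z ∈ R) :
    ∃ u : ℝ ≃o ℝ, (∀ z ∈ Z, u z = z) ∧ ∀ x, sign (p x) = sign (q (u x)) := by
  induction R using Finset.induction_on generalizing q Z with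
  | empty => exact ⟨OrderIso.refl ℝ, fun _ _ => rfl,
      sign_eq_of_strictComonotoneOn hp hl hm hlm hZ hpq (by simpa using hroot)⟩
  | insert r R _ ih =>
    by_cases hr : r ∈ Ioo l m ∧ p r = 0 ∧ r ∉ Z
    · obtain ⟨hrlm, hr0, hrZ⟩ := hr
      obtain ⟨v, hvr, hvZ, hvlm⟩ := exists_orderIso_apply_eq_zero hq hl hm hZ hpq hrlm hrZ hr0
      obtain ⟨u, hu, hsign⟩ := ih (q := q ∘ v) (Z := insert r Z) (hq.comp v.continuous)
        (Finset.mem_insert_of_mem hl) (Finset.mem_insert_of_mem hm)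
        (fun z hz => by rw [Function.comp_apply, hvlm z hz, hlm z hz])
        ((Finset.forall_mem_insert _ _ _).2 ⟨by simp [hvr, hr0],
          fun z hz => by rw [Function.comp_apply, hvZ z hz, hZ z hz]⟩)
        (fun c d hcd => StrictComonotoneOn.comp_orderIso hpq hvZ c d fun z hz =>
          hcd z (Finset.mem_insert_of_mem hz))
        (fun z hz hz0 => by
          have := hroot z hz hz0
          rw [Finset.mem_insert] at this ⊢
          tauto)
      have huZ := ((Finset.forall_mem_insert _ _ _).1 hu).2
      exact ⟨u.trans v, fun z hz => (congrArg v (huZ z hz)).trans (hvZ z hz), hsign⟩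
    · refine ih hq hl hm hlm hZ hpq fun z hz hz0 => ?_
      have := hroot z hz hz0
      rw [Finset.mem_insert] at this
      rcases this with h | rfl | h <;> tauto

end StrictComonotoneOn

theorem sign_apply_orderIso_eq {f : ℝ → ℝ} (hf : Continuous f) {u : ℝ ≃o ℝ}
    (hu : ∀ z, f z = 0 → u z = z) (x : ℝ) : sign (f (u x)) = sign (f x) := by
  by_cases hx : f x = 0
  · rw [hu x hx]
  refine sign_eq_of_isPreconnected isPreconnected_uIcc hf.continuousOn (fun z hz hz0 => hx ?_)
    right_mem_uIcc left_mem_uIcc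
  have hzu : z = u x := by
    rcases mem_uIcc.1 hz with ⟨h, h'⟩ | ⟨h, h'⟩
    · exact h'.antisymm ((u.monotone h).trans_eq (hu z hz0))
    · exact ((hu z hz0).symm.trans_le (u.monotone h')).antisymm h
  rwa [← u.injective ((hu z hz0).trans hzu)]

/-- The increasing bijection `e` carries the sign of `p` at each point to that of `q`: the two
polynomials have the same sign diagram, up to the position of the points on the line. -/
def MatchSigns (e : ℝ ≃o ℝ) (p q : ℝ[X]) : Prop :=
  ∀ x, sign (p.eval x) = sign (q.eval (e x))

theorem eventually_sign_eval_atTop (p : ℝ[X]) :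
    ∀ᶠ x in atTop, sign (p.eval x) = sign p.leadingCoeff := by
  filter_upwards [eventually_sign_eq_of_isEquivalent p.isEquivalent_atTop_lead,
    eventually_gt_atTop 0] with x hx hx0
  rw [hx, sign_mul, sign_pos (pow_pos hx0 _), mul_one]

theorem eventually_sign_eval_atBot (p : ℝ[X]) :
    ∀ᶠ x in atBot, sign (p.eval x) = sign p.leadingCoeff * (-1) ^ p.natDegree := by
  filter_upwards [eventually_sign_eq_of_isEquivalent p.isEquivalent_atBot_lead,
    eventually_lt_atBot 0] with x hx hx0
  rw [hx, sign_mul, sign_pow, sign_neg hx0]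

theorem exists_forall_notMem_Ioo_sign_eval_eq (e : ℝ ≃o ℝ) {p q : ℝ[X]}
    (hdeg : p.natDegree = q.natDegree) (hlead : sign p.leadingCoeff = sign q.leadingCoeff) :
    ∃ l m, ∀ x ∉ Ioo l m, sign (p.eval x) = sign (q.eval (e x)) := by
  obtain ⟨l, hl⟩ := eventually_atBot.1 <| (eventually_sign_eval_atBot p).and <|
    e.tendsto_atBot.eventually (eventually_sign_eval_atBot q)
  obtain ⟨m, hm⟩ := eventually_atTop.1 <| (eventually_sign_eval_atTop p).and <|
    e.tendsto_atTop.eventually (eventually_sign_eval_atTop q)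
  refine ⟨l, m, fun x hx => ?_⟩
  rcases le_or_gt x l with hxl | hlx
  · rw [(hl x hxl).1, (hl x hxl).2, hlead, hdeg]
  · have hmx : m ≤ x := not_lt.1 fun h => hx ⟨hlx, h⟩
    rw [(hm x hmx).1, (hm x hmx).2, hlead]

theorem strictMonoOn_eval_Icc {p : ℝ[X]} {a b : ℝ}
    (hp : ∀ x ∈ Ioo a b, 0 < (derivative p).eval x) : StrictMonoOn (fun x => p.eval x) (Icc a b) :=
  strictMonoOn_of_deriv_pos (convex_Icc a b) p.continuousOn fun x hx => by
    rw [Polynomial.deriv]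
    exact hp x (interior_Icc (a := a) ▸ hx)

theorem strictAntiOn_eval_Icc {p : ℝ[X]} {a b : ℝ}
    (hp : ∀ x ∈ Ioo a b, (derivative p).eval x < 0) : StrictAntiOn (fun x => p.eval x) (Icc a b) :=
  strictAntiOn_of_deriv_neg (convex_Icc a b) p.continuousOn fun x hx => by
    rw [Polynomial.deriv]
    exact hp x (interior_Icc (a := a) ▸ hx)

namespace MatchSigns

variable {e : ℝ ≃o ℝ} {p q : ℝ[X]}

theorem orderIso_trans (h : MatchSigns e p q) {u : ℝ ≃o ℝ} (hu : ∀ z ∈ p.roots, u z = z) :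
    MatchSigns (u.trans e) p q := by
  intro x
  rw [OrderIso.trans_apply, ← h]
  by_cases hp : p = 0
  · simp [hp]
  · exact (sign_apply_orderIso_eq p.continuous (fun z hz => hu z ((mem_roots hp).2 hz)) x).symm

theorem strictComonotoneOn (h : MatchSigns e (derivative p) (derivative q)) {a b : ℝ}
    (hne : ∀ x ∈ Ioo a b, (derivative p).eval x ≠ 0) :
    StrictComonotoneOn (fun x => p.eval x) (fun x => q.eval (e x)) (Icc a b) := by
  have he : MapsTo e (Icc a b) (Icc (e a) (e b)) := fun x hx =>
    ⟨e.monotone hx.1, e.monotone hx.2⟩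
  have hq : ∀ y ∈ Ioo (e a) (e b), ∃ x ∈ Ioo a b,
      sign ((derivative q).eval y) = sign ((derivative p).eval x) := fun y hy =>
    ⟨e.symm y, ⟨e.lt_symm_apply.2 hy.1, e.symm_apply_lt.2 hy.2⟩, by rw [h, e.apply_symm_apply]⟩
  by_cases hpos : ∀ x ∈ Ioo a b, 0 < (derivative p).eval x
  · refine .inl ⟨strictMonoOn_eval_Icc hpos,
      (strictMonoOn_eval_Icc fun y hy => ?_).comp (e.strictMono.strictMonoOn _) he⟩
    obtain ⟨x, hx, hxy⟩ := hq y hy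
    rw [← sign_eq_one_iff, hxy, sign_pos (hpos x hx)]
  · push Not at hpos
    obtain ⟨c, hc, hc0⟩ := hpos
    have hneg : ∀ x ∈ Ioo a b, (derivative p).eval x < 0 := fun x hx => by
      rw [← sign_eq_neg_one_iff, sign_eq_of_isPreconnected isPreconnected_Ioo
        (derivative p).continuousOn hne hx hc, sign_neg (hc0.lt_of_ne (hne c hc))]
    refine .inr ⟨strictAntiOn_eval_Icc hneg,
      (strictAntiOn_eval_Icc fun y hy => ?_).comp_strictMonoOn (e.strictMono.strictMonoOn _) he⟩
    obtain ⟨x, hx, hxy⟩ := hq y hy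
    rw [← sign_eq_neg_one_iff, hxy, sign_neg (hneg x hx)]

theorem exists_trans (h : MatchSigns e (derivative p) (derivative q)) (hp : derivative p ≠ 0)
    (hdeg : p.natDegree = q.natDegree) (hlead : sign p.leadingCoeff = sign q.leadingCoeff)
    {Z : Finset ℝ} (hderiv : ∀ z ∈ (derivative p).roots, z ∈ Z)
    (hZ : ∀ z ∈ Z, sign (p.eval z) = sign (q.eval (e z))) :
    ∃ u : ℝ ≃o ℝ, (∀ z ∈ Z, u z = z) ∧ MatchSigns (u.trans e) p q := by
  obtain ⟨l, m, hlm⟩ := exists_forall_notMem_Ioo_sign_eval_eq e hdeg hlead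
  have hp0 : p ≠ 0 := fun h0 => hp (by rw [h0, derivative_zero])
  obtain ⟨u, hu, hpq⟩ := exists_orderIso_forall_sign_eq (Z := insert l (insert m Z))
    p.continuous (q.continuous.comp e.continuous) (by simp) (by simp) hlm
    (by simpa only [Finset.forall_mem_insert] using ⟨hlm l (by simp), hlm m (by simp), hZ⟩)
    (fun a b hab => h.strictComonotoneOn fun x hx hx0 =>
      hab x (by simp [hderiv x ((mem_roots hp).2 hx0)]) hx)
    p.roots.toFinset (fun x _ hx => .inr (by simpa [hp0] using hx))
  exact ⟨u, fun z hz => hu z (by simp [hz]), hpq⟩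

theorem exists_extend {ι : Type*} {s : Finset ι} {f g : ι → ℝ[X]}
    (h : ∀ i ∈ s, MatchSigns e (f i) (g i))
    (hderiv : ∃ i ∈ s, f i = derivative p ∧ g i = derivative q) (hp : derivative p ≠ 0)
    (hdeg : p.natDegree = q.natDegree) (hlead : sign p.leadingCoeff = sign q.leadingCoeff)
    (hroots : ∀ i ∈ s, ∀ x ∈ (f i).roots, sign (p.eval x) = sign (q.eval (e x))) :
    ∃ e' : ℝ ≃o ℝ, MatchSigns e' p q ∧ ∀ i ∈ s, MatchSigns e' (f i) (g i) := by
  let Z : Finset ℝ := s.biUnion fun i => (f i).roots.toFinset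
  have mem_Z {i : ι} (hi : i ∈ s) {z : ℝ} (hz : z ∈ (f i).roots) : z ∈ Z :=
    Finset.mem_biUnion.2 ⟨i, hi, Multiset.mem_toFinset.2 hz⟩
  obtain ⟨i, hi, hfi, hgi⟩ := hderiv
  obtain ⟨u, hu, hpq⟩ := exists_trans (hfi ▸ hgi ▸ h i hi) hp hdeg hlead (Z := Z)
    (fun z hz => mem_Z hi (hfi ▸ hz)) fun z hz => by
      obtain ⟨j, hj, hzj⟩ := Finset.mem_biUnion.1 hz
      exact hroots j hj z (Multiset.mem_toFinset.1 hzj)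
  exact ⟨u.trans e, hpq, fun j hj => (h j hj).orderIso_trans fun z hz => hu z (mem_Z hj hz)⟩

end MatchSigns

section IsPseudoRem

variable {A : Type*} [CommRing A] {f g r : A[X]}

/-- `r` is a pseudo-remainder of `f` modulo `g`: the remainder of `f` multiplied by a power of the
leading coefficient of `g`. The power is even so that multiplying by it preserves signs. -/
def IsPseudoRem (f g r : A[X]) : Prop :=
  r.natDegree < g.natDegree ∧ ∃ k, Even k ∧ g ∣ C (g.leadingCoeff ^ k) * f - r

theorem exists_isPseudoRem (f : A[X]) (hg : g.natDegree ≠ 0) : ∃ r, IsPseudoRem f g r := by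
  induction hn : f.natDegree using Nat.strong_induction_on generalizing f with
  | _ n ih =>
  subst hn
  by_cases hfg : f.natDegree < g.natDegree
  · exact ⟨f, hfg, 0, Even.zero, by simp⟩
  push Not at hfg
  obtain ⟨r, hr, k, hk, hdvd⟩ := ih _ ((natDegree_C_mul_le g.leadingCoeff _).trans_lt
    (natDegree_cancelLeads_lt_of_natDegree_le_natDegree hfg (by lia))) _ rfl
  have hlead : g ∣ C g.leadingCoeff * f - g.cancelLeads f := by
    rw [cancelLeads, Nat.sub_eq_zero_of_le hfg, pow_zero, mul_one, sub_sub_cancel]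
    exact dvd_mul_left _ _
  refine ⟨r, hr, k + 2, hk.add even_two, ?_⟩
  convert (hlead.mul_left (C (g.leadingCoeff ^ k) * C g.leadingCoeff)).add hdvd using 1
  simp only [pow_add, map_mul, map_pow]
  ring

theorem IsPseudoRem.sign_eval_map {R : Type*} [CommRing R] [LinearOrder R] [IsStrictOrderedRing R]
    (h : IsPseudoRem f g r) {φ : A →+* R} (hg : φ g.leadingCoeff ≠ 0) {x : R}
    (hx : (g.map φ).eval x = 0) : sign ((f.map φ).eval x) = sign ((r.map φ).eval x) := by
  obtain ⟨-, k, hk, q, hq⟩ := h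
  have heval := congrArg (fun p => (p.map φ).eval x) hq
  simp only [Polynomial.map_sub, Polynomial.map_mul, map_C, eval_sub, eval_mul, eval_C, hx,
    zero_mul, sub_eq_zero, map_pow φ] at heval
  rw [← heval, sign_mul, sign_pos (hk.pow_pos hg), one_mul]

end IsPseudoRem

theorem map_eraseLead_of_map_leadingCoeff_eq_zero {A B : Type*} [Semiring A] [Semiring B]
    {φ : A →+* B} {f : A[X]} (h : φ f.leadingCoeff = 0) : f.eraseLead.map φ = f.map φ := by
  nth_rw 2 [← f.eraseLead_add_monomial_natDegree_leadingCoeff]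
  rw [Polynomial.map_add, map_monomial, h, monomial_zero_right, add_zero]

theorem exists_superset_forall_op_subset {α : Type*} (d : α → ℕ) (op : α → α → Finset α)
    (hop : ∀ f g, ∀ h ∈ op f g, d h < d g) (S : Finset α) :
    ∃ T, S ⊆ T ∧ ∀ f ∈ T, ∀ g ∈ T, d g ≤ d f → op f g ⊆ T := by
  classical
  -- What `op` adds at `d g = n` lies below level `n`: the levels can be closed from the top down.
  suffices key : ∀ n (S : Finset α), (∀ f ∈ S, ∀ g ∈ S, d g ≤ d f → n ≤ d g → op f g ⊆ S) →
      ∃ T, S ⊆ T ∧ ∀ f ∈ T, ∀ g ∈ T, d g ≤ d f → op f g ⊆ T from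
    key (S.sup d + 1) S fun f _ g hg _ h => absurd (Finset.le_sup (f := d) hg) (by lia)
  intro n
  induction n with
  | zero => exact fun S hS => ⟨S, subset_rfl, by simpa using hS⟩
  | succ n ih =>
    intro S hS
    let N : Finset α := S.biUnion fun f => (S.filter (d · = n)).biUnion (op f)
    have mem_S {f : α} (hf : f ∈ S ∪ N) (hn : n ≤ d f) : f ∈ S := by
      refine (Finset.mem_union.1 hf).resolve_right fun hfN => ?_
      simp only [N, Finset.mem_biUnion, Finset.mem_filter] at hfN
      obtain ⟨_, -, g, ⟨-, hg⟩, hfg⟩ := hfN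
      exact (hop _ g f hfg).not_ge (hg ▸ hn)
    obtain ⟨T, hT, hclosed⟩ := ih (S ∪ N) fun f hf g hg hgf hn => by
      have hfS := mem_S hf (hn.trans hgf)
      have hgS := mem_S hg hn
      rcases hn.eq_or_lt with hn | hn
      · exact fun h hh => Finset.mem_union_right _ <| Finset.mem_biUnion.2
          ⟨f, hfS, Finset.mem_biUnion.2 ⟨g, Finset.mem_filter.2 ⟨hgS, hn.symm⟩, hh⟩⟩
      · exact (hS f hfS g hgS hgf hn).trans Finset.subset_union_left
    exact ⟨T, Finset.subset_union_left.trans hT, hclosed⟩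

/-- The set `S` of polynomials is closed under the operations by which the sign diagram of a
polynomial is reduced to those of polynomials of smaller degree. -/
structure IsSignClosed {A : Type*} [CommRing A] (S : Finset A[X]) : Prop where
  derivative_mem : ∀ f ∈ S, f.natDegree ≠ 0 → derivative f ∈ S
  eraseLead_mem : ∀ f ∈ S, f.natDegree ≠ 0 → f.eraseLead ∈ S
  exists_isPseudoRem : ∀ f ∈ S, ∀ g ∈ S, g.natDegree ≠ 0 → g.natDegree ≤ f.natDegree →
    ∃ r ∈ S, IsPseudoRem f g r

section IsSignClosed

variable {A : Type*} [CommRing A]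

theorem exists_superset_isSignClosed (S : Finset A[X]) : ∃ T, S ⊆ T ∧ IsSignClosed T := by
  classical
  choose rem hrem using fun (f g : A[X]) => exists_isPseudoRem f (g := g)
  let op : A[X] → A[X] → Finset A[X] := fun f g =>
    if hg : g.natDegree = 0 then ∅ else {derivative g, g.eraseLead, rem f g hg}
  have hop : ∀ f g, ∀ h ∈ op f g, h.natDegree < g.natDegree := by
    intro f g h hh
    by_cases hg : g.natDegree = 0
    · simp [op, hg] at hh
    simp only [op, hg, dite_false, Finset.mem_insert, Finset.mem_singleton] at hh
    rcases hh with rfl | rfl | rfl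
    · exact natDegree_derivative_lt hg
    · exact g.eraseLead_natDegree_le.trans_lt (by lia)
    · exact (hrem f g hg).1
  obtain ⟨T, hST, hT⟩ := exists_superset_forall_op_subset natDegree op hop S
  have mem_T {f g h : A[X]} (hf : f ∈ T) (hg : g ∈ T) (hgf : g.natDegree ≤ f.natDegree)
      (hh : h ∈ op f g) : h ∈ T := hT f hf g hg hgf hh
  exact ⟨T, hST, fun f hf hf0 => mem_T hf hf le_rfl (by simp [op, hf0]),
    fun f hf hf0 => mem_T hf hf le_rfl (by simp [op, hf0]),
    fun f hf g hg hg0 hgf => ⟨_, mem_T hf hg hgf (by simp [op, hg0]), hrem f g hg0⟩⟩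

theorem mem_of_mem_insert_of_natDegree_lt [DecidableEq A[X]] {S : Finset A[X]} {a f : A[X]}
    (hf : f ∈ insert a S) (h : f.natDegree < a.natDegree) : f ∈ S :=
  Finset.mem_of_mem_insert_of_ne hf fun hfa => h.ne (congrArg natDegree hfa)

namespace IsSignClosed

variable {S : Finset A[X]} {a : A[X]}

theorem of_insert [DecidableEq A[X]] (h : IsSignClosed (insert a S))
    (ha : ∀ f ∈ S, f.natDegree ≤ a.natDegree) : IsSignClosed S where
  derivative_mem f hf hf0 := mem_of_mem_insert_of_natDegree_lt
    (h.derivative_mem f (Finset.mem_insert_of_mem hf) hf0)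
    ((natDegree_derivative_lt hf0).trans_le (ha f hf))
  eraseLead_mem f hf hf0 := mem_of_mem_insert_of_natDegree_lt
    (h.eraseLead_mem f (Finset.mem_insert_of_mem hf) hf0)
    ((f.eraseLead_natDegree_le.trans_lt (by lia)).trans_le (ha f hf))
  exists_isPseudoRem f hf g hg hg0 hgf := by
    obtain ⟨r, hr, hfgr⟩ := h.exists_isPseudoRem f (Finset.mem_insert_of_mem hf) g
      (Finset.mem_insert_of_mem hg) hg0 hgf
    exact ⟨r, mem_of_mem_insert_of_natDegree_lt hr (hfgr.1.trans_le (ha g hg)), hfgr⟩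

variable {φ ψ : A →+* ℝ} {e : ℝ ≃o ℝ}

theorem sign_eval_map_eq_of_mem_roots (hS : IsSignClosed S)
    (hlead : ∀ f ∈ S, sign (φ f.leadingCoeff) = sign (ψ f.leadingCoeff))
    (h : ∀ f ∈ S, MatchSigns e (f.map φ) (f.map ψ))
    (hrem : ∀ g ∈ S, g.natDegree ≠ 0 → ∃ r ∈ S, IsPseudoRem a g r) {g : A[X]} (hg : g ∈ S) {x : ℝ}
    (hx : x ∈ (g.map φ).roots) :
    sign ((a.map φ).eval x) = sign ((a.map ψ).eval (e x)) := by
  induction hn : g.natDegree using Nat.strong_induction_on generalizing g with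
  | _ n ih =>
  subst hn
  by_cases hg0 : g.natDegree = 0
  · rw [eq_C_of_natDegree_eq_zero hg0, map_C, roots_C] at hx
    simp at hx
  by_cases hφg : φ g.leadingCoeff = 0
  · exact ih _ (g.eraseLead_natDegree_le.trans_lt (by lia)) (hS.eraseLead_mem g hg hg0)
      (by rwa [map_eraseLead_of_map_leadingCoeff_eq_zero hφg]) rfl
  obtain ⟨r, hr, hagr⟩ := hrem g hg hg0
  have hψg : ψ g.leadingCoeff ≠ 0 := by rwa [← sign_ne_zero, ← hlead g hg, sign_ne_zero]
  have hφx : (g.map φ).eval x = 0 := (mem_roots'.1 hx).2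
  have hψx : (g.map ψ).eval (e x) = 0 := by
    rw [← sign_eq_zero_iff, ← h g hg x, hφx, sign_zero]
  rw [hagr.sign_eval_map hφg hφx, hagr.sign_eval_map hψg hψx, h r hr x]

theorem exists_matchSigns_insert_of_ne_zero [DecidableEq A[X]] (hS : IsSignClosed (insert a S))
    (ha : ∀ f ∈ S, f.natDegree ≤ a.natDegree)
    (hlead : ∀ f ∈ insert a S, sign (φ f.leadingCoeff) = sign (ψ f.leadingCoeff))
    (h : ∀ f ∈ S, MatchSigns e (f.map φ) (f.map ψ)) (ha0 : a.natDegree ≠ 0)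
    (hφa : φ a.leadingCoeff ≠ 0) (hψa : ψ a.leadingCoeff ≠ 0) :
    ∃ e' : ℝ ≃o ℝ, MatchSigns e' (a.map φ) (a.map ψ) ∧
      ∀ f ∈ S, MatchSigns e' (f.map φ) (f.map ψ) := by
  have haS := Finset.mem_insert_self a S
  have hderiv : derivative a ∈ S := mem_of_mem_insert_of_natDegree_lt
    (hS.derivative_mem a haS ha0) (natDegree_derivative_lt ha0)
  have hrem : ∀ g ∈ S, g.natDegree ≠ 0 → ∃ r ∈ S, IsPseudoRem a g r := fun g hg hg0 =>
    let ⟨r, hr, hagr⟩ :=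
      hS.exists_isPseudoRem a haS g (Finset.mem_insert_of_mem hg) hg0 (ha g hg)
    ⟨r, mem_of_mem_insert_of_natDegree_lt hr (hagr.1.trans_le (ha g hg)), hagr⟩
  have hdegφ := natDegree_map_of_leadingCoeff_ne_zero φ hφa
  have hdegψ := natDegree_map_of_leadingCoeff_ne_zero ψ hψa
  refine MatchSigns.exists_extend h
    ⟨derivative a, hderiv, (derivative_map _ _).symm, (derivative_map _ _).symm⟩
    (by rwa [Ne, derivative_eq_zero, hdegφ]) (hdegφ.trans hdegψ.symm) ?_ fun g hg x hx =>
      (hS.of_insert ha).sign_eval_map_eq_of_mem_roots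
        (fun f hf => hlead f (Finset.mem_insert_of_mem hf)) h hrem hg hx
  rw [leadingCoeff_map_of_leadingCoeff_ne_zero φ hφa,
    leadingCoeff_map_of_leadingCoeff_ne_zero ψ hψa, hlead a haS]

theorem exists_matchSigns_insert [DecidableEq A[X]] (hS : IsSignClosed (insert a S))
    (ha : ∀ f ∈ S, f.natDegree ≤ a.natDegree)
    (hlead : ∀ f ∈ insert a S, sign (φ f.leadingCoeff) = sign (ψ f.leadingCoeff))
    (h : ∀ f ∈ S, MatchSigns e (f.map φ) (f.map ψ)) :
    ∃ e' : ℝ ≃o ℝ, MatchSigns e' (a.map φ) (a.map ψ) ∧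
      ∀ f ∈ S, MatchSigns e' (f.map φ) (f.map ψ) := by
  have haS := Finset.mem_insert_self a S
  have hzero : φ a.leadingCoeff = 0 ↔ ψ a.leadingCoeff = 0 := by
    rw [← sign_eq_zero_iff, hlead a haS, sign_eq_zero_iff]
  by_cases ha0 : a.natDegree = 0
  · refine ⟨e, fun x => ?_, h⟩
    rw [eq_C_of_natDegree_eq_zero ha0, map_C, map_C, eval_C, eval_C]
    simpa only [leadingCoeff, ha0] using hlead a haS
  by_cases hφa : φ a.leadingCoeff = 0
  · have hmatch := h a.eraseLead (mem_of_mem_insert_of_natDegree_lt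
      (hS.eraseLead_mem a haS ha0) (a.eraseLead_natDegree_le.trans_lt (by lia)))
    rw [map_eraseLead_of_map_leadingCoeff_eq_zero hφa,
      map_eraseLead_of_map_leadingCoeff_eq_zero (hzero.1 hφa)] at hmatch
    exact ⟨e, hmatch, h⟩
  exact hS.exists_matchSigns_insert_of_ne_zero ha hlead h ha0 hφa (hzero.not.1 hφa)

theorem exists_forall_matchSigns (hS : IsSignClosed S)
    (hlead : ∀ f ∈ S, sign (φ f.leadingCoeff) = sign (ψ f.leadingCoeff)) :
    ∃ e : ℝ ≃o ℝ, ∀ f ∈ S, MatchSigns e (f.map φ) (f.map ψ) := by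
  classical
  induction S using Finset.induction_on_max_value (ι := A[X]) (f := natDegree) with
  | empty => exact ⟨OrderIso.refl ℝ, by simp⟩
  | insert a S _ ha ih =>
    obtain ⟨e, he⟩ := ih (hS.of_insert ha) fun f hf => hlead f (Finset.mem_insert_of_mem hf)
    simpa only [Finset.forall_mem_insert] using hS.exists_matchSigns_insert ha hlead he

end IsSignClosed

theorem exists_finset_forall_matchSigns (F : Finset A[X]) :
    ∃ P : Finset A, ∀ φ ψ : A →+* ℝ, (∀ a ∈ P, sign (φ a) = sign (ψ a)) →
      ∃ e : ℝ ≃o ℝ, ∀ f ∈ F, MatchSigns e (f.map φ) (f.map ψ) := by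
  classical
  obtain ⟨S, hFS, hS⟩ := exists_superset_isSignClosed F
  refine ⟨S.image leadingCoeff, fun φ ψ h => ?_⟩
  obtain ⟨e, he⟩ := hS.exists_forall_matchSigns fun f hf => h _ (Finset.mem_image_of_mem _ hf)
  exact ⟨e, fun f hf => he f (hFS hf)⟩

theorem exists_finset_forall_exists_sign_eval₂_eq (F : Finset A[X][X]) :
    ∃ P : Finset A, ∀ φ ψ : A →+* ℝ, (∀ a ∈ P, sign (φ a) = sign (ψ a)) →
      ∀ x y : ℝ, ∃ x' y' : ℝ, ∀ f ∈ F, sign (eval₂ (eval₂RingHom φ x) y f) =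
        sign (eval₂ (eval₂RingHom ψ x') y' f) := by
  obtain ⟨P₁, hP₁⟩ := exists_finset_forall_matchSigns F
  obtain ⟨P, hP⟩ := exists_finset_forall_matchSigns P₁
  refine ⟨P, fun φ ψ h x y => ?_⟩
  obtain ⟨e, he⟩ := hP φ ψ h
  obtain ⟨e₁, he₁⟩ := hP₁ (eval₂RingHom φ x) (eval₂RingHom ψ (e x)) fun a ha => by
    simpa only [coe_eval₂RingHom, eval_map] using he a ha x
  exact ⟨e x, e₁ y, fun f hf => by simpa only [eval_map] using he₁ f hf y⟩

end IsSignClosed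

theorem norm_lt_add_one_of_isRoot {K : Type*} [NormedDivisionRing K] {p : K[X]} (hp : p ≠ 0)
    {c : ℝ} (hc0 : 0 ≤ c) (hc : ∀ i < p.natDegree, ‖p.coeff i‖ ≤ c * ‖p.leadingCoeff‖) {a : K}
    (ha : p.IsRoot a) : ‖a‖ < c + 1 := by
  lift c to NNReal using hc0
  have hlead : 0 < ‖p.leadingCoeff‖₊ := nnnorm_pos.2 (leadingCoeff_ne_zero.2 hp)
  have hsup : (Finset.range p.natDegree).sup (‖p.coeff ·‖₊) / ‖p.leadingCoeff‖₊ ≤ c :=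
    (div_le_iff₀ hlead).2 (Finset.sup_le fun i hi => hc i (Finset.mem_range.1 hi))
  exact (ha.norm_lt_cauchyBound hp).trans_le (add_le_add_left hsup 1)

theorem eventually_norm_eval_le_pow_mul {p q : ℝ[X]} (hq : q ≠ 0) {n : ℕ} (hn : p.natDegree < n) :
    ∀ᶠ x in atTop, ‖p.eval x‖ ≤ x ^ n * ‖q.eval x‖ := by
  have hdeg : p.degree < (X ^ n * q).degree := by
    refine degree_lt_degree ?_
    rw [natDegree_X_pow_mul _ hq]
    lia
  filter_upwards [(isLittleO_atTop_of_degree_lt _ _ hdeg).bound one_pos, eventually_ge_atTop 0]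
    with x hx hx0
  simpa only [one_mul, eval_mul, eval_pow, eval_X, norm_mul, norm_pow, Real.norm_of_nonneg hx0]
    using hx

theorem exists_eventually_evalEval_ne_zero {p : ℝ[X][X]} (hp : p ≠ 0) :
    ∃ k : ℕ, ∀ᶠ x in atTop, ∀ y, x ^ k ≤ y → p.evalEval x y ≠ 0 := by
  have hlead : p.leadingCoeff ≠ 0 := leadingCoeff_ne_zero.2 hp
  let n := (Finset.range p.natDegree).sup (fun i => (p.coeff i).natDegree) + 1
  have hn {i : ℕ} (hi : i ∈ Finset.range p.natDegree) : (p.coeff i).natDegree < n :=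
    Nat.lt_succ_of_le (Finset.le_sup (f := fun i => (p.coeff i).natDegree) hi)
  refine ⟨n + 1, ?_⟩
  filter_upwards [eventually_ge_atTop 2, eventually_atTop_not_isRoot _ hlead,
    (eventually_all_finset (Finset.range p.natDegree)).2 fun i hi =>
      eventually_norm_eval_le_pow_mul hlead (hn hi)]
    with x hx2 hx hcoeff y hy hy0
  have hx' : evalRingHom x p.leadingCoeff ≠ 0 := hx
  have hdeg := natDegree_map_of_leadingCoeff_ne_zero _ hx'
  have hlead' := leadingCoeff_map_of_leadingCoeff_ne_zero _ hx'
  have hroot : ‖y‖ < x ^ n + 1 := by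
    refine norm_lt_add_one_of_isRoot (p := p.map (evalRingHom x)) ?_ (by positivity) ?_ ?_
    · rwa [← leadingCoeff_ne_zero, hlead']
    · simpa only [hdeg, hlead', coeff_map, coe_evalRingHom, Finset.mem_range] using hcoeff
    · rw [IsRoot, map_evalRingHom_eval, hy0]
  have hpow : x ^ n + 1 ≤ x ^ (n + 1) := by
    nlinarith [one_le_pow₀ (by linarith : 1 ≤ x) (n := n), pow_succ x n]
  exact (hroot.trans_le hpow).not_ge (hy.trans (le_abs_self y))

theorem exists_eventually_sign_evalEval_eq (p : ℝ[X][X]) :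
    ∃ k : ℕ, ∀ᶠ x in atTop, ∀ y y', x ^ k ≤ y → x ^ k ≤ y' →
      sign (p.evalEval x y) = sign (p.evalEval x y') := by
  by_cases hp : p = 0
  · exact ⟨0, .of_forall fun x y y' _ _ => by simp [hp]⟩
  obtain ⟨k, hk⟩ := exists_eventually_evalEval_ne_zero hp
  refine ⟨k, hk.mono fun x hx y y' hy hy' => ?_⟩
  have hcont : Continuous fun y => p.evalEval x y := by
    simpa only [map_evalRingHom_eval] using (p.map (evalRingHom x)).continuous
  exact sign_eq_of_isPreconnected isPreconnected_Ici hcont.continuousOn hx hy hy'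

theorem exists_eventually_forall_sign_evalEval_eq (P : Finset ℝ[X][X]) :
    ∃ k : ℕ, ∀ᶠ x in atTop, ∀ y y', x ^ k ≤ y → x ^ k ≤ y' →
      ∀ p ∈ P, sign (p.evalEval x y) = sign (p.evalEval x y') := by
  choose k hk using exists_eventually_sign_evalEval_eq
  refine ⟨P.sup k, ?_⟩
  filter_upwards [(eventually_all_finset P).2 fun p _ => hk p, eventually_ge_atTop 1]
    with x hx hx1 y y' hy hy' p hp
  have hle : x ^ k p ≤ x ^ P.sup k := pow_le_pow_right₀ hx1 (Finset.le_sup hp)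
  exact hx p hp y y' (hle.trans hy) (hle.trans hy')

/-- A polynomial in two variables, viewed as an iterated univariate polynomial over a ring `A` of
parameters; the variable `0` is the inner one. -/
noncomputable def toIterated (A : Type*) [CommRing A] [Algebra ℝ A] :
    MvPolynomial (Fin 2) ℝ →ₐ[ℝ] A[X][X] :=
  MvPolynomial.aeval ![C X, X]

theorem eval₂_toIterated {A : Type*} [CommRing A] [Algebra ℝ A] (φ : A →+* ℝ) (x y : ℝ)
    (p : MvPolynomial (Fin 2) ℝ) :
    eval₂ (eval₂RingHom φ x) y (toIterated A p) = MvPolynomial.eval ![x, y] p := by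
  have hφ (r : ℝ) : φ (algebraMap ℝ A r) = r :=
    DFunLike.congr_fun (Subsingleton.elim (φ.comp (algebraMap ℝ A)) (RingHom.id ℝ)) r
  induction p using MvPolynomial.induction_on with
  | C r => simp [toIterated, Polynomial.algebraMap_apply, hφ]
  | add p q hp hq => rw [map_add, eval₂_add, hp, hq, map_add]
  | mul_X p i hp =>
    rw [map_mul, eval₂_mul, hp, map_mul]
    fin_cases i <;> simp [toIterated]

theorem exists_finset_forall_exists_sign_eq {A : Type*} [CommRing A] [Algebra ℝ A]
    (Q : Finset (MvPolynomial (Fin 2) ℝ))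
    (T : Finset (A × MvPolynomial (Fin 2) ℝ × MvPolynomial (Fin 2) ℝ)) :
    ∃ P : Finset A, ∀ φ ψ : A →+* ℝ, (∀ a ∈ P, sign (φ a) = sign (ψ a)) →
      ∀ x y, ∃ x' y',
        (∀ q ∈ Q, sign (MvPolynomial.eval ![x, y] q) = sign (MvPolynomial.eval ![x', y'] q)) ∧
        ∀ t ∈ T, MvPolynomial.eval ![x, y] t.2.2 ≠ 0 → MvPolynomial.eval ![x', y'] t.2.2 ≠ 0 →
          sign (MvPolynomial.eval ![x, y] t.2.1 / MvPolynomial.eval ![x, y] t.2.2 - φ t.1) =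
          sign (MvPolynomial.eval ![x', y'] t.2.1 / MvPolynomial.eval ![x', y'] t.2.2 - ψ t.1) := by
  classical
  let ι := toIterated A
  let diff : A × MvPolynomial (Fin 2) ℝ × MvPolynomial (Fin 2) ℝ → A[X][X] := fun t =>
    (ι t.2.1 - C (C t.1) * ι t.2.2) * ι t.2.2
  have eval₂_diff (φ : A →+* ℝ) (x y : ℝ) (t) : eval₂ (eval₂RingHom φ x) y (diff t) =
      (MvPolynomial.eval ![x, y] t.2.1 - φ t.1 * MvPolynomial.eval ![x, y] t.2.2) *
        MvPolynomial.eval ![x, y] t.2.2 := by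
    simp only [diff, ι, eval₂_mul, eval₂_sub, eval₂_toIterated, eval₂_C, coe_eval₂RingHom]
  obtain ⟨P, hP⟩ := exists_finset_forall_exists_sign_eval₂_eq (Q.image ι ∪ T.image diff)
  refine ⟨P, fun φ ψ h x y => ?_⟩
  obtain ⟨x', y', h'⟩ := hP φ ψ h x y
  refine ⟨x', y', fun q hq => ?_, fun t ht h0 h0' => ?_⟩
  · simpa only [ι, eval₂_toIterated] using
      h' (ι q) (Finset.mem_union_left _ (Finset.mem_image_of_mem ι hq))
  · rw [sign_div_sub _ h0, sign_div_sub _ h0', ← eval₂_diff, ← eval₂_diff]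
    exact h' _ (Finset.mem_union_right _ (Finset.mem_image_of_mem diff ht))

section Xi

variable {Q : Finset (MvPolynomial (Fin 2) ℝ)} {σ : MvPolynomial (Fin 2) ℝ → ℝ}
  {D G : Finset (MvPolynomial (Fin 2) ℝ × MvPolynomial (Fin 2) ℝ)}

theorem exists_finset_forall_Xi (hDG : ∀ pp ∈ D ∪ G, pp.2 ∈ Q ∧ σ pp.2 ≠ 0) :
    ∃ P : Finset ℝ[X][X], ∀ L H L' H',
      (∀ p ∈ P, sign (p.evalEval L H) = sign (p.evalEval L' H')) →
      Xi Q σ D G L H → Xi Q σ D G L' H' := by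
  classical
  have ne_zero {x y : ℝ} (h : ∀ q ∈ Q, Real.sign (MvPolynomial.eval ![x, y] q) = σ q) :
      ∀ pp ∈ D ∪ G, MvPolynomial.eval ![x, y] pp.2 ≠ 0 := fun pp hpp h0 =>
    (hDG pp hpp).2 (by rw [← h _ (hDG pp hpp).1, h0, Real.sign_zero])
  obtain ⟨P, hP⟩ := exists_finset_forall_exists_sign_eq Q
    (D.image (Prod.mk (C X : ℝ[X][X])) ∪ G.image (Prod.mk X))
  refine ⟨P, fun L H L' H' h ⟨x, y, hQ, hD, hG⟩ => ?_⟩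
  obtain ⟨x', y', hsign, hratio⟩ := hP (evalEvalRingHom L H) (evalEvalRingHom L' H') h x y
  have hQ' : ∀ q ∈ Q, Real.sign (MvPolynomial.eval ![x', y'] q) = σ q := fun q hq => by
    rw [← hQ q hq, ← coe_sign_eq_real_sign, ← coe_sign_eq_real_sign, hsign q hq]
  refine ⟨x', y', hQ', fun pp hpp => ?_, fun pp hpp => ?_⟩
  · have hmem := Finset.mem_union_left G hpp
    have := hratio (C X, pp) (Finset.mem_union_left _ (Finset.mem_image_of_mem _ hpp))
      (ne_zero hQ pp hmem) (ne_zero hQ' pp hmem)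
    simp only [coe_evalEvalRingHom, evalEval_C, eval_X] at this
    rw [← sub_nonpos, ← sign_nonpos_iff, ← this, sign_nonpos_iff, sub_nonpos]
    exact hD pp hpp
  · have hmem := Finset.mem_union_right D hpp
    have := hratio (X, pp) (Finset.mem_union_right _ (Finset.mem_image_of_mem _ hpp))
      (ne_zero hQ pp hmem) (ne_zero hQ' pp hmem)
    simp only [coe_evalEvalRingHom, evalEval_X] at this
    rw [← sub_nonneg, ← sign_nonneg_iff, ← this, sign_nonneg_iff, sub_nonneg]
    exact hG pp hpp

theorem Xi.anti_right {L H H' : ℝ} (h : Xi Q σ D G L H) (hH : H' ≤ H) : Xi Q σ D G L H' := by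
  obtain ⟨x, y, hQ, hD, hG⟩ := h
  exact ⟨x, y, hQ, hD, fun pp hpp => hH.trans (hG pp hpp)⟩

theorem exists_eventually_forall_Xi (hDG : ∀ pp ∈ D ∪ G, pp.2 ∈ Q ∧ σ pp.2 ≠ 0) :
    ∃ k : ℕ, ∀ᶠ L in atTop, ∀ H, L ^ k ≤ H → Xi Q σ D G L H → ∀ H', Xi Q σ D G L H' := by
  obtain ⟨P, hP⟩ := exists_finset_forall_Xi hDG
  obtain ⟨k, hk⟩ := exists_eventually_forall_sign_evalEval_eq P
  refine ⟨k, hk.mono fun L hL H hH hXi H' => ?_⟩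
  have hmax : Xi Q σ D G L (max H H') :=
    hP L H L _ (hL H _ hH (hH.trans (le_max_left H H'))) hXi
  exact hmax.anti_right (le_max_right H H')

end Xi

/-- with `Q`, `σ`, `D`, `G` as described (all numerator/denominator pairs
taken from `Q`, denominators with nonzero prescribed sign), the formula
`Ψ : ∀ n ∀ R ≥ 2, ∃ L H, L ≥ R ∧ H ≥ L^(R^(n+2)) ∧ Ξ(L,H)` is equivalent to
`Ψ* : ∀ R ≥ 2, ∃ L ≥ R, ∀ H, Ξ(L,H)`. -/
theorem stmt12 (Q : Finset (MvPolynomial (Fin 2) ℝ)) (σ : MvPolynomial (Fin 2) ℝ → ℝ)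
    (hσ : ∀ q ∈ Q, σ q = -1 ∨ σ q = 0 ∨ σ q = 1)
    (D G : Finset (MvPolynomial (Fin 2) ℝ × MvPolynomial (Fin 2) ℝ))
    (hDG : ∀ pp ∈ D ∪ G, pp.1 ∈ Q ∧ pp.2 ∈ Q ∧ σ pp.2 ≠ 0) :
    ((∀ n : ℕ, ∀ R : ℝ, 2 ≤ R → ∃ L H : ℝ,
        R ≤ L ∧ L ^ (R ^ ((n : ℝ) + 2)) ≤ H ∧ Xi Q σ D G L H) ↔
     (∀ R : ℝ, 2 ≤ R → ∃ L : ℝ, R ≤ L ∧ ∀ H : ℝ, Xi Q σ D G L H)) := by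
  constructor
  · intro h R hR
    obtain ⟨k, hk⟩ := exists_eventually_forall_Xi fun pp hpp => (hDG pp hpp).2
    obtain ⟨N, hN⟩ := eventually_atTop.1 hk
    let R' := max R (max N k)
    have hRR' : R ≤ R' := le_max_left _ _
    have hNR' : N ≤ R' := (le_max_left _ _).trans (le_max_right _ _)
    have hkR' : k ≤ R' := (le_max_right _ _).trans (le_max_right _ _)
    obtain ⟨L, H, hL, hH, hXi⟩ := h 0 R' (hR.trans hRR')
    have hpow : L ^ k ≤ H := by
      refine le_trans ?_ hH
      rw [← Real.rpow_natCast]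
      exact Real.rpow_le_rpow_of_exponent_le (by linarith)
        (hkR'.trans (Real.self_le_rpow_of_one_le (by linarith) (by norm_num)))
    exact ⟨L, hRR'.trans hL, hN L (hNR'.trans hL) H hpow hXi⟩
  · intro h n R hR
    obtain ⟨L, hL, hXi⟩ := h R hR
    exact ⟨L, _, hL, le_rfl, hXi _⟩
end

section
/- Diagonal effective compactness: for all positive integers d, D, k there exists N such that for all finite sets P and Q of real polynomials in the d·k coordinates of k points of ℝ^d, each polynomial of total degree at most D, the following holds for the predicate Φ(x₁,…,x_k) := (∀p ∈ P, p(x₁,…,x_k) = 0) ∧ (∀q ∈ Q, q(x₁,…,x_k) > 0): if there exists a set A ⊆ ℝ^d of cardinality N such that Φ(a₁,…,a_k) holds for every k-tuple (a₁,…,a_k) ∈ A^k, then there exists an infinite set X ⊆ ℝ^d such that Φ(x₁,…,x_k) holds for every (x₁,…,x_k) ∈ X^k. -/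
/-!
Let `V` be the common zero set of all polynomials of degree at most `D` that vanish on `A`. An
equation of degree at most `D` that holds on `A ^ k` propagates to `V ^ k`, one point at a time, and
the strict inequalities persist near any diagonal point `(a, …, a)` with `a ∈ A`. So it suffices
that some `a ∈ A` is not isolated in `V`.

Now `V` is the zero set of a single sum of squares `f` of degree at most `2 * D`, and isolated
points of `V` are strict local minima of `f`. Each of them survives as a nearby critical point when
`f` is tilted by a small linear form `∑ cᵢ xᵢ`, that is, as a solution of `∇f = c`. For generic `c`
the number of solutions is bounded in terms of the degree: by a dimension count, each coordinate
`Xᵢ` satisfies a nontrivial polynomial relation of bounded degree over `ℝ[∂f]`, so on the fibre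
`∇f = c` it takes a bounded number of values.
-/

open MvPolynomial Filter Topology

section MvPolynomialDegree

variable {σ τ R : Type*} [CommSemiring R]

theorem totalDegree_bind₁_le_mul {p : MvPolynomial σ R} {g : σ → MvPolynomial τ R} {E : ℕ}
    (hg : ∀ i, (g i).totalDegree ≤ E) : (bind₁ g p).totalDegree ≤ p.totalDegree * E := by
  rw [bind₁, aeval_def, eval₂_eq, algebraMap_eq]
  refine totalDegree_finsetSum_le fun s hs => ?_
  calc (C (coeff s p) * ∏ i ∈ s.support, g i ^ s i).totalDegree
      ≤ (C (coeff s p)).totalDegree + ∑ i ∈ s.support, (g i ^ s i).totalDegree :=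
        (totalDegree_mul _ _).trans (by gcongr; exact totalDegree_finsetProd _ _)
    _ ≤ ∑ i ∈ s.support, s i * E := by
        rw [totalDegree_C, zero_add]
        exact Finset.sum_le_sum fun i _ => (totalDegree_pow _ _).trans (by gcongr; exact hg i)
    _ = (s.sum fun _ e => e) * E := (Finset.sum_mul _ _ _).symm
    _ ≤ p.totalDegree * E := by gcongr; exact le_totalDegree hs

theorem totalDegree_pderiv_le (p : MvPolynomial σ R) (i : σ) :
    (pderiv i p).totalDegree ≤ p.totalDegree := by
  refine Finset.sup_le fun s hs => ?_
  have hmem : s + Finsupp.single i 1 ∈ p.support := by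
    rw [mem_support_iff, coeff_pderiv] at hs
    exact mem_support_iff.2 (left_ne_zero_of_mul hs)
  calc (s.sum fun _ e => e) ≤ (s + Finsupp.single i 1).sum fun _ e => e := by
        rw [Finsupp.sum_add_index' (fun _ => rfl) fun _ _ _ => rfl]
        exact Nat.le_add_right _ _
    _ ≤ p.totalDegree := le_totalDegree hmem

theorem totalDegree_le_card_mul_of_mem_restrictDegree [Fintype σ] {p : MvPolynomial σ R} {n : ℕ}
    (hp : p ∈ restrictDegree σ R n) : p.totalDegree ≤ Fintype.card σ * n := by
  refine Finset.sup_le fun s hs => ?_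
  rw [Finsupp.sum_fintype _ _ fun _ => rfl]
  simpa using Finset.sum_le_card_nsmul Finset.univ s n fun i _ =>
    (mem_restrictDegree σ p n).1 hp s hs i

theorem finrank_restrictDegree (σ R : Type*) [Fintype σ] [CommRing R] [Nontrivial R] (n : ℕ) :
    Module.finrank R (restrictDegree σ R n) = (n + 1) ^ Fintype.card σ := by
  let e : {s : σ →₀ ℕ // ∀ i, s i ≤ n} ≃ (σ → Set.Iic n) :=
    (Finsupp.equivFunOnFinite.subtypeEquiv fun _ => Iff.rfl).trans
      (Equiv.subtypePiEquivPi (p := fun _ m => m ≤ n))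
  have card_exponents : Nat.card {s : σ →₀ ℕ | ∀ i, s i ≤ n} = (n + 1) ^ Fintype.card σ :=
    (Nat.card_congr e).trans (by simp [Nat.card_fun])
  rw [restrictDegree, Module.finrank_eq_nat_card_basis (basisRestrictSupport R _), card_exponents]

theorem totalDegree_sum_bind₁_mul_pow_le {g : σ → MvPolynomial τ R} {h : MvPolynomial τ R}
    {n m E : ℕ} (hg : ∀ i, (g i).totalDegree ≤ E) (hh : h.totalDegree ≤ E)
    {c : Fin (m + 1) → MvPolynomial σ R} (hc : ∀ j, (c j).totalDegree ≤ n) :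
    (∑ j, bind₁ g (c j) * h ^ (j : ℕ)).totalDegree ≤ (n + m) * E := by
  refine totalDegree_finsetSum_le fun j _ => ?_
  calc (bind₁ g (c j) * h ^ (j : ℕ)).totalDegree
      ≤ (c j).totalDegree * E + j * h.totalDegree :=
        (totalDegree_mul _ _).trans (add_le_add (totalDegree_bind₁_le_mul hg) (totalDegree_pow _ _))
    _ ≤ n * E + m * E := by
        gcongr
        · exact hc j
        · exact Nat.lt_succ_iff.1 j.2
    _ = (n + m) * E := (add_mul _ _ _).symm

end MvPolynomialDegree

section GenericFiber

theorem eval_map_eval_eq_zero_of_eval₂_bind₁_eq_zero {σ τ R : Type*} [CommSemiring R]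
    {g : σ → MvPolynomial τ R} {h : MvPolynomial τ R}
    {p : Polynomial (MvPolynomial σ R)} (hp : p.eval₂ (bind₁ g).toRingHom h = 0) (x : τ → R) :
    (p.map (eval fun i => eval x (g i))).eval (eval x h) = 0 := by
  have hcomp : (eval x).comp (bind₁ g).toRingHom = eval fun i => eval x (g i) :=
    RingHom.ext fun q => eval₂Hom_bind₁ _ _ _ q
  rw [Polynomial.eval_map, ← hcomp, ← Polynomial.hom_eval₂, hp, map_zero]

variable {σ K : Type*} [Field K] {E : ℕ} {g : σ → MvPolynomial σ K}

theorem exists_sum_bind₁_mul_pow_eq_zero [Fintype σ] (hE : 0 < E)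
    (hg : ∀ i, (g i).totalDegree ≤ E) {h : MvPolynomial σ K} (hh : h.totalDegree ≤ E) :
    ∃ c : Fin (((Fintype.card σ + 1) * E) ^ Fintype.card σ + 1) → MvPolynomial σ K,
      c ≠ 0 ∧ ∑ j, bind₁ g (c j) * h ^ (j : ℕ) = 0 := by
  set d := Fintype.card σ
  set m := ((d + 1) * E) ^ d with hm
  let Φ : (Fin (m + 1) → restrictDegree σ K m) →ₗ[K] MvPolynomial σ K :=
    ∑ j : Fin (m + 1), LinearMap.mulRight K (h ^ (j : ℕ)) ∘ₗ (bind₁ g).toLinearMap ∘ₗ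
      (restrictDegree σ K m).subtype ∘ₗ LinearMap.proj j
  have Φ_apply (c) : Φ c = ∑ j, bind₁ g (c j : MvPolynomial σ K) * h ^ (j : ℕ) := by simp [Φ]
  have Φ_mem (c) : Φ c ∈ restrictDegree σ K ((d * m + m) * E) := by
    refine restrictTotalDegree_le_restrictDegree σ K _ ((mem_restrictTotalDegree _ _ _).2 ?_)
    rw [Φ_apply]
    exact totalDegree_sum_bind₁_mul_pow_le hg hh fun j =>
      totalDegree_le_card_mul_of_mem_restrictDegree (c j).2
  have finrank_lt : Module.finrank K (restrictDegree σ K ((d * m + m) * E)) <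
      Module.finrank K (Fin (m + 1) → restrictDegree σ K m) := by
    calc Module.finrank K (restrictDegree σ K ((d * m + m) * E))
        = ((d * m + m) * E + 1) ^ d := finrank_restrictDegree ..
      _ ≤ ((d + 1) * E * (m + 1)) ^ d := by
          gcongr
          nlinarith [Nat.mul_pos d.succ_pos hE]
      _ = m * (m + 1) ^ d := by rw [mul_pow, ← hm]
      _ < (m + 1) * (m + 1) ^ d := by gcongr; exact m.lt_succ_self
      _ = Module.finrank K (Fin (m + 1) → restrictDegree σ K m) := by
          simp [Module.finrank_pi_fintype, finrank_restrictDegree, d]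
  obtain ⟨c, hc, hc0⟩ := (Submodule.ne_bot_iff _).1
    ((Φ.codRestrict _ Φ_mem).ker_ne_bot_of_finrank_lt finrank_lt)
  rw [LinearMap.ker_codRestrict, LinearMap.mem_ker, Φ_apply] at hc
  exact ⟨fun j => c j, fun h0 => hc0 (funext fun j => Subtype.ext (congrFun h0 j)), hc⟩

theorem exists_polynomial_eval₂_bind₁_eq_zero [Fintype σ] (hE : 0 < E)
    (hg : ∀ i, (g i).totalDegree ≤ E) {h : MvPolynomial σ K} (hh : h.totalDegree ≤ E) :
    ∃ p : Polynomial (MvPolynomial σ K), p ≠ 0 ∧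
      p.natDegree ≤ ((Fintype.card σ + 1) * E) ^ Fintype.card σ ∧
      p.eval₂ (bind₁ g).toRingHom h = 0 := by
  obtain ⟨c, hc0, hc⟩ := exists_sum_bind₁_mul_pow_eq_zero hE hg hh
  refine ⟨∑ j : Fin _, Polynomial.monomial (j : ℕ) (c j), fun h0 => hc0 (funext fun j => ?_),
    ?_, ?_⟩
  · have hj := congrArg (Polynomial.coeff · (j : ℕ)) h0
    simpa [Polynomial.finsetSum_coeff, Polynomial.coeff_monomial, Fin.val_inj] using hj
  · exact Polynomial.natDegree_sum_le_of_forall_le _ _ fun j _ =>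
      (Polynomial.natDegree_monomial_le _).trans (Nat.lt_succ_iff.1 j.2)
  · simpa [Polynomial.eval₂_finsetSum, Polynomial.eval₂_monomial] using hc

theorem exists_encard_fiber_le [Fintype σ] (hE : 0 < E) (hg : ∀ i, (g i).totalDegree ≤ E) :
    ∃ q : MvPolynomial σ K, q ≠ 0 ∧ ∀ c : σ → K, eval c q ≠ 0 →
      {x : σ → K | ∀ i, eval x (g i) = c i}.encard ≤
        (((Fintype.card σ + 1) * E) ^ (Fintype.card σ ^ 2) : ℕ) := by
  classical
  choose p hp0 hpdeg hp using fun i : σ =>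
    exists_polynomial_eval₂_bind₁_eq_zero hE hg (h := X i) ((totalDegree_X i).trans_le hE)
  refine ⟨∏ i, (p i).leadingCoeff,
    Finset.prod_ne_zero_iff.2 fun i _ => Polynomial.leadingCoeff_ne_zero.2 (hp0 i), fun c hc => ?_⟩
  rw [map_prod, Finset.prod_ne_zero_iff] at hc
  let r (i : σ) : Polynomial K := (p i).map (eval c)
  have hr0 (i : σ) : r i ≠ 0 := fun h => hc i (Finset.mem_univ i) <| by
    simpa [r] using congrArg (Polynomial.coeff · (p i).natDegree) h
  have hsub : {x : σ → K | ∀ i, eval x (g i) = c i} ⊆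
      Fintype.piFinset fun i => (r i).roots.toFinset := by
    intro x hx
    have hroot (i : σ) : (r i).eval (x i) = 0 := by
      simpa [r, funext hx] using eval_map_eval_eq_zero_of_eval₂_bind₁_eq_zero (hp i) x
    simpa [hr0] using hroot
  refine (Set.encard_le_encard hsub).trans ?_
  rw [Set.encard_coe_eq_coe_finsetCard, Nat.cast_le, Fintype.card_piFinset, sq, pow_mul]
  refine Finset.prod_le_pow_card _ _ _ fun i _ => ?_
  calc (r i).roots.toFinset.card ≤ (r i).natDegree :=
        (Multiset.toFinset_card_le _).trans (Polynomial.card_roots' _)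
    _ ≤ (p i).natDegree := Polynomial.natDegree_map_le
    _ ≤ _ := hpdeg i

end GenericFiber

theorem frequently_eval_ne_zero {σ 𝕜 : Type*} [NontriviallyNormedField 𝕜]
    {p : MvPolynomial σ 𝕜} (hp : p ≠ 0) (x : σ → 𝕜) : ∃ᶠ y in 𝓝 x, eval y p ≠ 0 := by
  intro h
  simp only [ne_eq, not_not] at h
  rw [nhds_pi, Filter.eventually_iff, Filter.mem_pi'] at h
  obtain ⟨I, s, hs, hsub⟩ := h
  refine hp (funext_set s (fun i => infinite_of_mem_nhds _ (hs i)) fun y hy => ?_)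
  rw [map_zero]
  exact hsub fun i _ => hy i (Set.mem_univ i)

section StrictLocalMin

/-- A strict local minimum: `f` takes larger values at all points near `a` other than `a` itself. It
stands in for an isolated zero, which is a strict local minimum of a nonnegative function. -/
def IsStrictLocalMin {X α : Type*} [TopologicalSpace X] [Preorder α] (f : X → α) (a : X) : Prop :=
  ∀ᶠ x in 𝓝[≠] a, f a < f x

theorem IsStrictLocalMin.eventually_exists_isLocalMin {T X α : Type*} [TopologicalSpace T]
    [TopologicalSpace X] [LocallyCompactSpace X] [LinearOrder α] [TopologicalSpace α]
    [OrderClosedTopology α] {f : T → X → α} (hf : Continuous f.uncurry) {t₀ : T} {a : X}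
    (ha : IsStrictLocalMin (f t₀) a) {U : Set X} (hU : U ∈ 𝓝 a) :
    ∀ᶠ t in 𝓝 t₀, ∃ x ∈ U, IsLocalMin (f t) x := by
  obtain ⟨s, hs, hsU, hscompact⟩ := local_compact_nhds
    (inter_mem hU (eventually_nhdsWithin_iff.1 ha))
  have hlt : ∀ᶠ t in 𝓝 t₀, ∀ x ∈ s \ interior s, f t a < f t x := by
    refine (hscompact.diff isOpen_interior).eventually_forall_of_forall_eventually fun x hx => ?_
    have hxa : x ≠ a := fun h => hx.2 (h ▸ mem_interior_iff_mem_nhds.2 hs)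
    have hfa : Continuous fun z : T × X => f z.1 a :=
      hf.comp (continuous_fst.prodMk continuous_const)
    exact hfa.continuousAt.eventually_lt hf.continuousAt ((hsU hx.1).2 hxa)
  filter_upwards [hlt] with t ht
  obtain ⟨x, hx, hmin⟩ := hscompact.exists_isLocalMin_mem_open interior_subset
    (hf.comp (.prodMk_right t)).continuousOn
    (mem_of_mem_nhds hs) ht isOpen_interior
  exact ⟨x, (hsU (interior_subset hx)).1, hmin⟩

theorem hasDerivAt_eval_update {σ 𝕜 : Type*} [DecidableEq σ] [NontriviallyNormedField 𝕜]
    (p : MvPolynomial σ 𝕜) (x : σ → 𝕜) (i : σ) (t : 𝕜) :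
    HasDerivAt (fun t => eval (Function.update x i t) p)
      (eval (Function.update x i t) (pderiv i p)) t := by
  induction p using MvPolynomial.induction_on with
  | C a => simpa using hasDerivAt_const t a
  | add p q hp hq => simpa only [map_add] using hp.fun_add hq
  | mul_X p j hp =>
    have hX : HasDerivAt (fun t => Function.update x i t j)
        (eval (Function.update x i t) (pderiv i (X j))) t := by
      rcases eq_or_ne j i with rfl | hji
      · simpa using hasDerivAt_id' t
      · simpa [pderiv_X_of_ne hji, hji] using hasDerivAt_const t (x j)
    simpa only [pderiv_mul, map_add, map_mul, eval_X] using hp.fun_mul hX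

theorem eval_pderiv_eq_zero_of_isLocalMin {σ : Type*} {p : MvPolynomial σ ℝ} {x : σ → ℝ}
    (hx : IsLocalMin (fun y => eval y p) x) (i : σ) : eval x (pderiv i p) = 0 := by
  classical
  have hderiv := hasDerivAt_eval_update p x i (x i)
  rw [Function.update_eq_self] at hderiv
  have hline : ContinuousAt (fun t => Function.update x i t) (x i) := by fun_prop
  rw [← Function.update_eq_self i x] at hx
  exact (hx.comp_continuous hline).hasDerivAt_eq_zero hderiv

variable {σ : Type*} {f : MvPolynomial σ ℝ}

theorem IsStrictLocalMin.eventually_exists_eval_pderiv_eq [Finite σ] {a : σ → ℝ}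
    (ha : IsStrictLocalMin (fun x => eval x f) a) {U : Set (σ → ℝ)} (hU : U ∈ 𝓝 a) :
    ∀ᶠ c : σ → ℝ in 𝓝 0, ∃ x ∈ U, ∀ i, eval x (pderiv i f) = c i := by
  classical
  have := Fintype.ofFinite σ
  let tilt (c : σ → ℝ) : MvPolynomial σ ℝ := f - ∑ i, C (c i) * X i
  have hcont : Continuous (fun c x => eval x (tilt c)).uncurry := by
    simp only [tilt, Function.uncurry_def, map_sub, map_sum, map_mul, eval_C, eval_X]
    exact ((continuous_eval f).comp continuous_snd).sub (by fun_prop)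
  have ha' : IsStrictLocalMin (fun x => eval x (tilt 0)) a := by simpa [tilt] using ha
  filter_upwards [ha'.eventually_exists_isLocalMin hcont hU] with c ⟨x, hxU, hmin⟩
  refine ⟨x, hxU, fun i => ?_⟩
  have hcrit := eval_pderiv_eq_zero_of_isLocalMin hmin i
  simpa [tilt, pderiv_C_mul, pderiv_X, Pi.single_apply, sub_eq_zero] using hcrit

theorem card_le_of_forall_isStrictLocalMin [Fintype σ] {E : ℕ} (hE : 0 < E) (hf : f.totalDegree ≤ E)
    {A : Finset (σ → ℝ)} (hA : ∀ a ∈ A, IsStrictLocalMin (fun x => eval x f) a) :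
    A.card ≤ ((Fintype.card σ + 1) * E) ^ (Fintype.card σ ^ 2) := by
  obtain ⟨q, hq0, hq⟩ := exists_encard_fiber_le hE fun i => (totalDegree_pderiv_le f i).trans hf
  obtain ⟨U, hU, hdisj⟩ := A.finite_toSet.t2_separation
  have hgrad : ∀ᶠ c : σ → ℝ in 𝓝 0, ∀ a ∈ A, ∃ x ∈ U a, ∀ i, eval x (pderiv i f) = c i :=
    (eventually_all_finset A).2 fun a ha =>
      (hA a ha).eventually_exists_eval_pderiv_eq ((hU a).2.mem_nhds (hU a).1)
  obtain ⟨c, hqc, hc⟩ := ((frequently_eval_ne_zero hq0 0).and_eventually hgrad).exists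
  choose! y hyU hy using hc
  have hinj : Set.InjOn y A := fun a ha b hb hab =>
    hdisj.elim_set ha hb (y a) (hyU a ha) (hab ▸ hyU b hb)
  have hle : (A : Set (σ → ℝ)).encard ≤ {x | ∀ i, eval x (pderiv i f) = c i}.encard :=
    Set.encard_le_encard_of_injOn hy hinj
  exact_mod_cast (Set.encard_coe_eq_coe_finsetCard A ▸ hle).trans (hq c hqc)

end StrictLocalMin

section ZariskiClosure

/-- The closure of `A` under the polynomial equations of degree at most `D`: the analogue of the
Zariski closure in which only polynomials of total degree at most `D` are tested. -/
def degreeZariskiClosure {σ R : Type*} [CommSemiring R] (D : ℕ) (A : Set (σ → R)) :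
    Set (σ → R) :=
  {x | ∀ p : MvPolynomial σ R, p.totalDegree ≤ D → (∀ a ∈ A, eval a p = 0) → eval x p = 0}

theorem subset_degreeZariskiClosure {σ R : Type*} [CommSemiring R] (D : ℕ) (A : Set (σ → R)) :
    A ⊆ degreeZariskiClosure D A :=
  fun a ha _ _ h => h a ha

theorem eval_update_eq_zero_of_mem_degreeZariskiClosure {ι σ R : Type*} [DecidableEq ι]
    [CommSemiring R] {D : ℕ} {A : Set (σ → R)} {p : MvPolynomial (ι × σ) R}
    (hp : p.totalDegree ≤ D) (x : ι → σ → R) (i : ι)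
    (hA : ∀ a ∈ A, eval (fun v => Function.update x i a v.1 v.2) p = 0)
    {z : σ → R} (hz : z ∈ degreeZariskiClosure D A) :
    eval (fun v => Function.update x i z v.1 v.2) p = 0 := by
  let g (v : ι × σ) : MvPolynomial σ R := if v.1 = i then X v.2 else C (x v.1 v.2)
  have hg (v) : (g v).totalDegree ≤ 1 := by
    by_cases h : v.1 = i
    · rw [show g v = monomial (Finsupp.single v.2 1) 1 from if_pos h]
      simpa using totalDegree_monomial_le (Finsupp.single v.2 1) (1 : R)
    · simp [g, h]
  have heval (y : σ → R) :
      eval y (bind₁ g p) = eval (fun v => Function.update x i y v.1 v.2) p := by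
    refine (eval₂Hom_bind₁ _ _ _ p).trans (congrArg (eval · p) (funext fun v => ?_))
    by_cases h : v.1 = i <;> simp [g, h]
  rw [← heval]
  refine hz _ ((totalDegree_bind₁_le_mul hg).trans (by rwa [mul_one])) fun a ha => ?_
  rw [heval, hA a ha]

theorem eval_eq_zero_of_forall_mem_degreeZariskiClosure {ι σ R : Type*} [Finite ι]
    [CommSemiring R] {D : ℕ} {A : Set (σ → R)} {p : MvPolynomial (ι × σ) R}
    (hp : p.totalDegree ≤ D)
    (hA : ∀ a : ι → σ → R, (∀ i, a i ∈ A) → eval (fun v => a v.1 v.2) p = 0)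
    {x : ι → σ → R} (hx : ∀ i, x i ∈ degreeZariskiClosure D A) :
    eval (fun v => x v.1 v.2) p = 0 := by
  classical
  have := Fintype.ofFinite ι
  -- The points are moved from `A` to the closure one at a time; `s` holds those already moved.
  suffices ∀ (s : Finset ι) (x : ι → σ → R), (∀ i ∈ s, x i ∈ degreeZariskiClosure D A) →
      (∀ i ∉ s, x i ∈ A) → eval (fun v => x v.1 v.2) p = 0 from
    this Finset.univ x (fun i _ => hx i) (by simp)
  intro s
  induction s using Finset.induction_on with
  | empty => exact fun x _ hxA => hA x fun i => hxA i (Finset.notMem_empty i)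
  | insert i s his ih =>
    intro x hxcl hxA
    rw [← Function.update_eq_self i x]
    refine eval_update_eq_zero_of_mem_degreeZariskiClosure hp x i (fun a ha => ih _ ?_ ?_)
      (hxcl i (Finset.mem_insert_self i s))
    · intro j hj
      rw [Function.update_of_ne (ne_of_mem_of_not_mem hj his)]
      exact hxcl j (Finset.mem_insert_of_mem hj)
    · intro j hj
      rcases eq_or_ne j i with rfl | hji
      · simpa using ha
      · simpa [hji] using hxA j (by simp [hji, hj])

theorem exists_degreeZariskiClosure_eq_zeros {σ R : Type*} [Finite σ] [Field R] [LinearOrder R]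
    [IsStrictOrderedRing R] (D : ℕ) (A : Set (σ → R)) :
    ∃ f : MvPolynomial σ R, f.totalDegree ≤ 2 * D ∧ (∀ x, 0 ≤ eval x f) ∧
      degreeZariskiClosure D A = {x | eval x f = 0} := by
  let S : Submodule R (MvPolynomial σ R) :=
    restrictTotalDegree σ R D ⊓ ⨅ a ∈ A, LinearMap.ker (aeval (R := R) a).toLinearMap
  have hS (p) : p ∈ S ↔ p.totalDegree ≤ D ∧ ∀ a ∈ A, eval a p = 0 := by
    simp [S, Submodule.mem_iInf, mem_restrictTotalDegree]
  have hfin : FiniteDimensional R S := Submodule.finiteDimensional_of_le inf_le_left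
  obtain ⟨T, hT⟩ := (Submodule.fg_iff_finiteDimensional S).2 hfin
  have hTS {b} (hb : b ∈ T) : b ∈ S := hT ▸ Submodule.subset_span hb
  have hzero (x : σ → R) : eval x (∑ b ∈ T, b ^ 2) = 0 ↔ ∀ b ∈ T, eval x b = 0 := by
    simp only [map_sum, map_pow]
    rw [Finset.sum_eq_zero_iff_of_nonneg fun b _ => sq_nonneg _]
    simp only [sq_eq_zero_iff]
  refine ⟨∑ b ∈ T, b ^ 2, ?_, fun x => ?_, Set.ext fun x => ⟨fun hx => ?_, fun hx p hpD hpA => ?_⟩⟩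
  · exact totalDegree_finsetSum_le fun b hb =>
      (totalDegree_pow _ _).trans (Nat.mul_le_mul_left _ ((hS b).1 (hTS hb)).1)
  · simpa only [map_sum, map_pow] using Finset.sum_nonneg fun b _ => sq_nonneg (eval x b)
  · exact (hzero x).2 fun b hb => hx b ((hS b).1 (hTS hb)).1 ((hS b).1 (hTS hb)).2
  · have hspan : S ≤ LinearMap.ker (aeval (R := R) x).toLinearMap :=
      hT ▸ Submodule.span_le.2 fun b hb => by simpa using (hzero x).1 hx b hb
    simpa using hspan ((hS p).2 ⟨hpD, hpA⟩)

theorem exists_accPt_degreeZariskiClosure {σ : Type*} [Fintype σ] {D : ℕ} {A : Finset (σ → ℝ)}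
    (hA : ((Fintype.card σ + 1) * (2 * D + 1)) ^ (Fintype.card σ ^ 2) < A.card) :
    ∃ a ∈ A, AccPt a (𝓟 (degreeZariskiClosure D (A : Set (σ → ℝ)))) := by
  obtain ⟨f, hfdeg, hfnonneg, hf⟩ := exists_degreeZariskiClosure_eq_zeros D (A : Set (σ → ℝ))
  by_contra! hisol
  refine hA.not_ge (card_le_of_forall_isStrictLocalMin (f := f) (Nat.succ_pos _)
    (hfdeg.trans (Nat.le_succ _)) fun a ha => ?_)
  have hfa : eval a f = 0 := hf.subset (subset_degreeZariskiClosure D _ ha)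
  have hne := hisol a ha
  rw [accPt_iff_frequently_nhdsNE, not_frequently, hf] at hne
  filter_upwards [hne] with x hx
  exact hfa ▸ lt_of_le_of_ne (hfnonneg x) (Ne.symm hx)

end ZariskiClosure

theorem isOpen_setOf_forall_eval_pos {ι σ R : Type*} [CommSemiring R] [LinearOrder R]
    [TopologicalSpace R] [IsTopologicalSemiring R] [OrderClosedTopology R]
    (Q : Finset (MvPolynomial (ι × σ) R)) :
    IsOpen {x : ι → σ → R | ∀ q ∈ Q, 0 < eval (fun v => x v.1 v.2) q} := by
  simp only [Set.ofPred_forall]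
  exact isOpen_biInter_finset fun q _ =>
    isOpen_lt continuous_const ((continuous_eval q).comp (by fun_prop))

theorem stmt14_general {ι σ : Type*} [Finite ι] [Fintype σ] {D : ℕ}
    {P : Set (MvPolynomial (ι × σ) ℝ)} (hP : ∀ p ∈ P, p.totalDegree ≤ D)
    {U : Set (ι → σ → ℝ)} (hU : IsOpen U) {A : Finset (σ → ℝ)}
    (hcard : ((Fintype.card σ + 1) * (2 * D + 1)) ^ (Fintype.card σ ^ 2) < A.card)
    (hA : ∀ a : ι → σ → ℝ, (∀ i, a i ∈ A) →
      (∀ p ∈ P, eval (fun v => a v.1 v.2) p = 0) ∧ a ∈ U) :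
    ∃ X : Set (σ → ℝ), X.Infinite ∧ ∀ x : ι → σ → ℝ, (∀ i, x i ∈ X) →
      (∀ p ∈ P, eval (fun v => x v.1 v.2) p = 0) ∧ x ∈ U := by
  have := Fintype.ofFinite ι
  obtain ⟨a, haA, hacc⟩ := exists_accPt_degreeZariskiClosure hcard
  obtain ⟨r, hr, hball⟩ := Metric.isOpen_iff.1 hU (fun _ => a) (hA _ fun _ => haA).2
  refine ⟨Metric.ball a r ∩ degreeZariskiClosure D A,
    .of_accPt (hacc.nhds_inter (Metric.ball_mem_nhds a hr)), fun x hx => ⟨fun p hp => ?_, ?_⟩⟩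
  · exact eval_eq_zero_of_forall_mem_degreeZariskiClosure (hP p hp)
      (fun b hb => (hA b hb).1 p hp) fun i => (hx i).2
  · exact hball ((dist_pi_lt_iff hr).2 fun i => (hx i).1)

/-- diagonal effective compactness: for all positive `d, D, k` there is
`N` such that for all finite sets `P`, `Q` of polynomials in the `d·k` coordinates of
`k` points of `ℝ^d`, all of total degree at most `D`, if the predicate
`Φ(x₁,…,x_k) := (∀ p ∈ P, p = 0) ∧ (∀ q ∈ Q, q > 0)` holds on every `k`-tuple of an
`N`-element set `A ⊆ ℝ^d`, then it holds on every `k`-tuple of some infinite set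
`X ⊆ ℝ^d`. -/
theorem stmt14 (d D k : ℕ) (hd : 0 < d) (hD : 0 < D) (hk : 0 < k) :
    ∃ N : ℕ, ∀ P Q : Finset (MvPolynomial (Fin k × Fin d) ℝ),
      (∀ p ∈ P, p.totalDegree ≤ D) → (∀ q ∈ Q, q.totalDegree ≤ D) →
      (∃ A : Finset (Fin d → ℝ), A.card = N ∧
          ∀ a : Fin k → Fin d → ℝ, (∀ i, a i ∈ A) →
            (∀ p ∈ P, MvPolynomial.eval (fun v => a v.1 v.2) p = 0) ∧
            (∀ q ∈ Q, 0 < MvPolynomial.eval (fun v => a v.1 v.2) q)) →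
      ∃ X : Set (Fin d → ℝ), X.Infinite ∧
        ∀ x : Fin k → Fin d → ℝ, (∀ i, x i ∈ X) →
          (∀ p ∈ P, MvPolynomial.eval (fun v => x v.1 v.2) p = 0) ∧
          (∀ q ∈ Q, 0 < MvPolynomial.eval (fun v => x v.1 v.2) q) := by
  refine ⟨((d + 1) * (2 * D + 1)) ^ (d ^ 2) + 1, fun P Q hP _ ⟨A, hcard, hA⟩ => ?_⟩
  exact stmt14_general hP (isOpen_setOf_forall_eval_pos Q) (by simp [hcard]) hA
end
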